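/- arXiv:nlin/0406059 — 13 statements merged into one kernel-verified Lean document; each statement's English description precedes it below -/
import Mathlib

section
/- Let 1 ≤ N ≤ M. Then the N×N Hankel determinant det( f_{n+k+k'}(x) )_{0≤k,k'≤N−1}, where f_m(x) = Σ_{j=1}^M exp(θ_m^{(j)}(x)), equals Σ_{1≤i_1<⋯<i_N≤M} Δ(i_1,…,i_N)·exp( Σ_{j=1}^N θ_n^{(i_j)}(x) ), where Δ(i_1,…,i_N) = ∏_{1≤j<l≤N} (p_{i_j} − p_{i_l})² is the square of the van der Monde determinant. -/
open scoped Classical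

lemma sum_inj_eq (M N : ℕ) (F : (Fin N → Fin M) → ℝ)
    (hF : ∀ ι, ¬ Function.Injective ι → F ι = 0) :
    ∑ ι, F ι = ∑ ι : Fin N → Fin M, if StrictMono ι then
      ∑ σ : Equiv.Perm (Fin N), F (ι ∘ σ) else 0 := by
  rw [← Finset.sum_filter, ← Finset.sum_product']
  have h1 : ∑ ι, F ι = ∑ ι ∈ Finset.univ.filter (fun ι : Fin N → Fin M => Function.Injective ι), F ι := by
    rw [Finset.sum_filter]
    refine Finset.sum_congr rfl fun ι _ => ?_
    split_ifs with h
    · rfl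
    · exact hF ι h
  rw [h1]
  symm
  refine Finset.sum_bij (fun q _ => q.1 ∘ q.2) ?_ ?_ ?_ ?_
  · rintro ⟨ι, σ⟩ h
    simp only [Finset.mem_product, Finset.mem_filter, Finset.mem_univ, true_and, and_true] at h ⊢
    exact h.injective.comp σ.injective
  · rintro ⟨ι, σ⟩ h ⟨κ, τ⟩ h' e
    simp only [Finset.mem_product, Finset.mem_filter, Finset.mem_univ, true_and, and_true] at h h' e
    have hr : Set.range ι = Set.range κ := by
      rw [← σ.surjective.range_comp ι, e, τ.surjective.range_comp κ]
    have h2 : ι = κ := (StrictMono.range_inj h h').1 hr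
    subst h2
    have : σ = τ := Equiv.ext fun a => h.injective (congrFun e a)
    rw [this]
  · intro ι h
    simp only [Finset.mem_filter, Finset.mem_univ, true_and] at h
    refine ⟨(ι ∘ Tuple.sort ι, (Tuple.sort ι)⁻¹), ?_, ?_⟩
    · simp only [Finset.mem_product, Finset.mem_filter, Finset.mem_univ, true_and, and_true]
      exact (Tuple.monotone_sort ι).strictMono_of_injective (h.comp (Tuple.sort ι).injective)
    · ext a
      simp
  · intros
    rfl

lemma det_hankel_sum (M N : ℕ) (p w : Fin M → ℝ) :
    Matrix.det (Matrix.of fun k k' : Fin N => ∑ j, w j * p j ^ (k : ℕ) * p j ^ (k' : ℕ)) =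
      ∑ ι : Fin N → Fin M, (∏ k, w (ι k) * p (ι k) ^ (k : ℕ)) *
        (Matrix.vandermonde (p ∘ ι)).det := by
  have h := (Matrix.detRowAlternating (n := Fin N) (R := ℝ)).toMultilinearMap.map_sum
    (fun (k : Fin N) (j : Fin M) => (fun k' : Fin N => w j * p j ^ (k : ℕ) * p j ^ (k' : ℕ)))
  have e : (Matrix.of fun k k' : Fin N => ∑ j, w j * p j ^ (k : ℕ) * p j ^ (k' : ℕ)) =
      (fun k : Fin N => ∑ j, (fun k' : Fin N => w j * p j ^ (k : ℕ) * p j ^ (k' : ℕ))) := by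
    funext k k'
    simp [Finset.sum_apply]
  rw [e]
  refine h.trans (Finset.sum_congr rfl fun ι _ => ?_)
  exact Matrix.det_mul_column (fun k => w (ι k) * p (ι k) ^ (k : ℕ)) (Matrix.vandermonde (p ∘ ι))

lemma cauchy_binet_hankel (M N : ℕ) (p w : Fin M → ℝ) :
    Matrix.det (Matrix.of fun k k' : Fin N => ∑ j, w j * p j ^ (k : ℕ) * p j ^ (k' : ℕ)) =
      ∑ ι : Fin N → Fin M, if StrictMono ι then
        (Matrix.vandermonde (p ∘ ι)).det ^ 2 * ∏ k, w (ι k) else 0 := by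
  rw [det_hankel_sum, sum_inj_eq]
  · refine Finset.sum_congr rfl fun ι _ => ?_
    split_ifs with h
    · have h1 : ∀ σ : Equiv.Perm (Fin N), (∏ k, w ((ι ∘ σ) k) * p ((ι ∘ σ) k) ^ (k : ℕ)) *
          (Matrix.vandermonde (p ∘ (ι ∘ σ))).det =
          ((Equiv.Perm.sign σ : ℤ) : ℝ) * (∏ k, (Matrix.vandermonde (p ∘ ι)) (σ k) k) *
            ((∏ k, w (ι k)) * (Matrix.vandermonde (p ∘ ι)).det) := by
        intro σ
        have h2 : (Matrix.vandermonde (p ∘ (ι ∘ σ))).det =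
            ((Equiv.Perm.sign σ : ℤ) : ℝ) * (Matrix.vandermonde (p ∘ ι)).det :=
          Matrix.det_permute σ (Matrix.vandermonde (p ∘ ι))
        rw [h2, Finset.prod_mul_distrib]
        have h3 : ∏ k, w ((ι ∘ σ) k) = ∏ k, w (ι k) := Equiv.prod_comp σ (fun k => w (ι k))
        rw [h3]
        simp only [Matrix.vandermonde_apply, Function.comp]
        ring
      rw [Finset.sum_congr rfl fun σ _ => h1 σ, ← Finset.sum_mul, ← Matrix.det_apply']
      ring
    · rfl
  · intro ι h
    have : (Matrix.vandermonde (p ∘ ι)).det = 0 := by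
      by_contra h0
      exact h (Function.Injective.of_comp (Matrix.det_vandermonde_ne_zero_iff.1 h0))
    rw [this, mul_zero]

/-- The N×N Hankel determinant of `f` equals the sum over strictly
increasing index tuples of the squared van der Monde determinant times the
exponential of the sum of the corresponding phases. -/
theorem stmt_0 (M N : ℕ) (hM : 1 ≤ M) (hN : 1 ≤ N) (hNM : N ≤ M)
    (p : Fin M → ℝ) (hp : ∀ j, 0 < p j) (hpmono : StrictMono p)
    (θ0 : Fin M → ℝ) (t : ℝ)
    (θ : Fin M → ℤ → ℝ → ℝ)
    (hθ : ∀ j m x, θ j m x = (m : ℝ) * Real.log (p j) + p j * x - t / p j + θ0 j)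
    (f : ℤ → ℝ → ℝ)
    (hf : ∀ m x, f m x = ∑ j, Real.exp (θ j m x))
    (n : ℤ) (x : ℝ) :
    Matrix.det (Matrix.of fun k k' : Fin N => f (n + ((k : ℕ) : ℤ) + ((k' : ℕ) : ℤ)) x) =
      ∑ ι : Fin N → Fin M,
        if StrictMono ι then
          (∏ a : Fin N, ∏ b : Fin N, if a < b then (p (ι a) - p (ι b)) ^ 2 else 1) *
            Real.exp (∑ j, θ (ι j) n x)
        else 0 := by
  have e : (Matrix.of fun k k' : Fin N => f (n + ((k : ℕ) : ℤ) + ((k' : ℕ) : ℤ)) x) =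
      Matrix.of fun k k' : Fin N =>
        ∑ j, Real.exp (θ j n x) * p j ^ (k : ℕ) * p j ^ (k' : ℕ) := by
    ext k k'
    simp only [Matrix.of_apply, hf]
    refine Finset.sum_congr rfl fun j _ => ?_
    have h1 : ∀ m : ℕ, p j ^ m = Real.exp (m * Real.log (p j)) := fun m => by
      rw [Real.exp_nat_mul, Real.exp_log (hp j)]
    rw [h1, h1, ← Real.exp_add, ← Real.exp_add, hθ, hθ]
    congr 1
    push_cast
    ring
  rw [e, cauchy_binet_hankel]
  refine Finset.sum_congr rfl fun ι _ => ?_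
  split_ifs with h
  · rw [Real.exp_sum, Matrix.det_vandermonde, ← Finset.prod_pow]
    congr 1
    refine Finset.prod_congr rfl fun a _ => ?_
    rw [← Finset.prod_filter, ← Finset.prod_pow]
    refine Finset.prod_congr ?_ fun b _ => ?_
    · ext b
      simp
    · simp only [Function.comp]
      ring
  · rfl
end

section
/- Let 1 ≤ N ≤ M. Then the N×N Hankel determinant det( f_{n+k+k'}(x) )_{0≤k,k'≤N−1}, where f_m(x) = Σ_{j=1}^M exp(θ_m^{(j)}(x)), is strictly positive for every n ∈ ℤ and x ∈ ℝ. -/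
/-- The N×N Hankel determinant of `f` is strictly positive for
every `n ∈ ℤ` and `x ∈ ℝ`. -/
theorem stmt_1 (M N : ℕ) (hM : 1 ≤ M) (hN : 1 ≤ N) (hNM : N ≤ M)
    (p : Fin M → ℝ) (hp : ∀ j, 0 < p j) (hpmono : StrictMono p)
    (θ0 : Fin M → ℝ) (t : ℝ)
    (θ : Fin M → ℤ → ℝ → ℝ)
    (hθ : ∀ j m x, θ j m x = (m : ℝ) * Real.log (p j) + p j * x - t / p j + θ0 j)
    (f : ℤ → ℝ → ℝ)
    (hf : ∀ m x, f m x = ∑ j, Real.exp (θ j m x))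
    (n : ℤ) (x : ℝ) :
    0 < Matrix.det (Matrix.of fun k k' : Fin N => f (n + ((k : ℕ) : ℤ) + ((k' : ℕ) : ℤ)) x) := by
  let A : Matrix (Fin M) (Fin N) ℝ :=
    Matrix.of fun j k => Real.exp (θ j n x / 2) * p j ^ (k : ℕ)
  have hA : (Matrix.of fun k k' : Fin N => f (n + ((k : ℕ) : ℤ) + ((k' : ℕ) : ℤ)) x)
      = A.conjTranspose * A := by
    ext k k'
    simp only [Matrix.of_apply, Matrix.mul_apply, Matrix.conjTranspose_apply, A, hf, star_trivial]
    refine Finset.sum_congr rfl fun j _ => ?_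
    have h1 : θ j (n + ((k : ℕ) : ℤ) + ((k' : ℕ) : ℤ)) x
        = θ j n x / 2 + θ j n x / 2 + ((k : ℕ) : ℝ) * Real.log (p j)
          + ((k' : ℕ) : ℝ) * Real.log (p j) := by
      rw [hθ, hθ]; push_cast; ring
    rw [h1, Real.exp_add, Real.exp_add, Real.exp_add, Real.exp_nat_mul, Real.exp_nat_mul,
      Real.exp_log (hp j)]
    ring
  rw [hA]
  refine (Matrix.PosDef.conjTranspose_mul_self A ?_).det_pos
  have key : ∀ v : Fin N → ℝ, A.mulVec v = 0 → v = 0 := by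
    intro v hv
    have hinj : Function.Injective (fun i : Fin N => p (Fin.castLE hNM i)) :=
      hpmono.injective.comp (Fin.castLE_injective hNM)
    refine Matrix.eq_zero_of_mulVec_eq_zero (Matrix.det_vandermonde_ne_zero_iff.mpr hinj) ?_
    ext i
    have h := congrFun hv (Fin.castLE hNM i)
    simp only [Matrix.mulVec, dotProduct, A, Matrix.of_apply, Pi.zero_apply, mul_assoc,
      ← Finset.mul_sum] at h
    simpa [Matrix.mulVec, dotProduct, Matrix.vandermonde_apply] using
      (mul_eq_zero.mp h).resolve_left (Real.exp_pos _).ne'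
  intro v w hvw
  have := key (v - w) (by rw [Matrix.mulVec_sub]; exact sub_eq_zero.mpr hvw)
  exact sub_eq_zero.mp this
end

section
/- Let M = 2 with 0 < p_1 < p_2, and let τ_n(x,t) = exp(θ_n^{(1)}(x,t)) + exp(θ_n^{(2)}(x,t)). Then the mixed second partial derivative ∂²/(∂x∂t) log τ_n(x,t) equals −(1/4)·(p_1−p_2)·(1/p_1 − 1/p_2)·( 1 / cosh²( (θ_n^{(1)}(x,t) − θ_n^{(2)}(x,t))/2 ) ) for all n ∈ ℤ, x ∈ ℝ, t ∈ ℝ. -/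
/-- For M = 2, the mixed second partial derivative
`∂²/(∂x∂t) log τ_n(x,t)` equals the one-soliton profile
`−(1/4)(p₁−p₂)(1/p₁−1/p₂) sech²((θ¹−θ²)/2)`. -/
theorem stmt_3 (p₁ p₂ : ℝ) (hp₁ : 0 < p₁) (h₁₂ : p₁ < p₂)
    (θ01 θ02 : ℝ)
    (θ1 θ2 : ℤ → ℝ → ℝ → ℝ)
    (hθ1 : ∀ n x t, θ1 n x t = (n : ℝ) * Real.log p₁ + p₁ * x - t / p₁ + θ01)
    (hθ2 : ∀ n x t, θ2 n x t = (n : ℝ) * Real.log p₂ + p₂ * x - t / p₂ + θ02)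
    (τ : ℤ → ℝ → ℝ → ℝ)
    (hτ : ∀ n x t, τ n x t = Real.exp (θ1 n x t) + Real.exp (θ2 n x t))
    (n : ℤ) (x t : ℝ) :
    deriv (fun x' => deriv (fun t' => Real.log (τ n x' t')) t) x =
      -(1 / 4) * (p₁ - p₂) * (1 / p₁ - 1 / p₂) *
        (1 / (Real.cosh ((θ1 n x t - θ2 n x t) / 2)) ^ 2) := by
  have hp₂ : 0 < p₂ := hp₁.trans h₁₂
  have ht : ∀ (p c y s : ℝ) (m : ℝ), HasDerivAt (fun t' => Real.exp (m + p * y - t' / p + c))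
      (Real.exp (m + p * y - s / p + c) * (-(1 / p))) s := by
    intro p c y s m
    have h := ((((hasDerivAt_id s).div_const p).const_sub (m + p * y)).add_const c).exp
    simpa using h
  have hx : ∀ (p c y s : ℝ) (m : ℝ), HasDerivAt (fun x' => Real.exp (m + p * x' - s / p + c))
      (Real.exp (m + p * y - s / p + c) * p) y := by
    intro p c y s m
    have h := (((((hasDerivAt_id y).const_mul p).const_add m).sub_const (s / p)).add_const c).exp
    simpa using h
  have h1 : (fun x' => deriv (fun t' => Real.log (τ n x' t')) t) = fun x' =>
      (Real.exp (n * Real.log p₁ + p₁ * x' - t / p₁ + θ01) * (-(1 / p₁)) +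
        Real.exp (n * Real.log p₂ + p₂ * x' - t / p₂ + θ02) * (-(1 / p₂))) /
      (Real.exp (n * Real.log p₁ + p₁ * x' - t / p₁ + θ01) +
        Real.exp (n * Real.log p₂ + p₂ * x' - t / p₂ + θ02)) := by
    funext y
    simp only [hτ, hθ1, hθ2]
    exact (((ht p₁ θ01 y t _).add (ht p₂ θ02 y t _)).log
      (by simp only [Pi.add_apply]; positivity)).deriv
  have h2 := (((hx p₁ θ01 x t (n * Real.log p₁)).mul_const (-(1 / p₁))).add
      ((hx p₂ θ02 x t (n * Real.log p₂)).mul_const (-(1 / p₂)))).div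
      ((hx p₁ θ01 x t (n * Real.log p₁)).add (hx p₂ θ02 x t (n * Real.log p₂)))
      (by simp only [Pi.add_apply]; positivity)
  rw [h1]
  refine h2.deriv.trans ?_
  simp only [Pi.add_apply, ← hθ1, ← hθ2]
  generalize θ1 n x t = A
  generalize θ2 n x t = B
  have hc : Real.cosh ((A - B) / 2) ^ 2 =
      (Real.exp A + Real.exp B) ^ 2 / (4 * Real.exp A * Real.exp B) := by
    have h3 := Real.cosh_two_mul ((A - B) / 2)
    rw [Real.sinh_sq, mul_div_cancel₀ _ two_ne_zero, Real.cosh_eq, neg_sub, Real.exp_sub,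
      Real.exp_sub] at h3
    have h4 : Real.cosh ((A - B) / 2) ^ 2 =
      ((Real.exp A / Real.exp B + Real.exp B / Real.exp A) / 2 + 1) / 2 := by linarith
    rw [h4]
    have := Real.exp_pos A
    have := Real.exp_pos B
    field_simp
    ring
  rw [hc]
  have := Real.exp_pos A
  have := Real.exp_pos B
  field_simp
  ring
end

section
/- Let 0 < p_1 < p_2 < ⋯ < p_M and let 1 ≤ i < j ≤ M. Then at c = c_{i,j} one has η_i(c) = η_j(c); moreover η_l(c) > η_i(c) for every l with i < l < j, and η_l(c) < η_i(c) for every l with l < i or l > j. Consequently the level of intersection σ_{i,j} := #{ l ∈ {1,…,M} : η_l(c_{i,j}) < η_i(c_{i,j}) } equals (i−1) + (M−j); equivalently, σ_{i,j} = s if and only if j = M − s + i − 1. -/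
open scoped Classical

/-- strict concavity of `x ↦ x * c + log x`, in three-point form -/
theorem aux_concave (c x y z : ℝ) (hx : 0 < x) (hxy : x < y) (hyz : y < z) :
    ((z * c + Real.log z) - (y * c + Real.log y)) * (y - x) <
      ((y * c + Real.log y) - (x * c + Real.log x)) * (z - y) := by
  have h := strictConcaveOn_log_Ioi.slope_anti_adjacent (x := x) (y := y) (z := z)
    (Set.mem_Ioi.2 hx) (Set.mem_Ioi.2 (by linarith)) hxy hyz
  rw [div_lt_div_iff₀ (by linarith) (by linarith)] at h
  linarith

/-- at `c = c_{i,j}` one has `η_i(c) = η_j(c)`; the lines `η_l`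
with `i < l < j` are above, all the others are below, and the level of
intersection `σ_{i,j}` equals `(i−1) + (M−j)` (in 1-based indexing);
equivalently `σ_{i,j} = s` iff `j = M − s + i − 1`.  Here indices are 0-based
elements of `Fin M`, so the level is `i + (M − 1 − j)` and the equivalence
reads `j + s + 1 = M + i` (with 0-based `i`, `j`). -/
theorem stmt_6 (M : ℕ) (p : Fin M → ℝ) (hp : ∀ j, 0 < p j) (hpmono : StrictMono p)
    (i j : Fin M) (hij : i < j)
    (η : Fin M → ℝ → ℝ) (hη : ∀ l c, η l c = p l * c + Real.log (p l))
    (c : ℝ) (hc : c = -(Real.log (p i) - Real.log (p j)) / (p i - p j)) :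
    η i c = η j c ∧
    (∀ l : Fin M, i < l → l < j → η i c < η l c) ∧
    (∀ l : Fin M, l < i ∨ j < l → η l c < η i c) ∧
    (Finset.univ.filter (fun l : Fin M => η l c < η i c)).card = (i : ℕ) + (M - 1 - (j : ℕ)) ∧
    (∀ s : ℕ, (Finset.univ.filter (fun l : Fin M => η l c < η i c)).card = s ↔
        (j : ℕ) + s + 1 = M + (i : ℕ)) := by
  have hne : p i - p j ≠ 0 := (sub_neg.2 (hpmono hij)).ne
  have h1 : η i c = η j c := by
    have : c * (p i - p j) = -(Real.log (p i) - Real.log (p j)) := by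
      rw [hc]; field_simp
    rw [hη, hη]; linarith
  have key : ∀ a b d : Fin M, a < b → b < d →
      (η d c - η b c) * (p b - p a) < (η b c - η a c) * (p d - p b) := by
    intro a b d hab hbd
    rw [hη, hη, hη]
    exact aux_concave c _ _ _ (hp a) (hpmono hab) (hpmono hbd)
  have h2 : ∀ l : Fin M, i < l → l < j → η i c < η l c := by
    intro l hl hl'
    have h := key i l j hl hl'
    have e1 := hpmono hl
    have e2 := hpmono hl'
    by_contra! hcon
    rw [← h1] at h
    have := mul_nonneg (sub_nonneg.2 hcon) (sub_nonneg.2 e1.le)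
    have := mul_nonneg (sub_nonneg.2 hcon) (sub_nonneg.2 e2.le)
    linarith
  have h3 : ∀ l : Fin M, l < i ∨ j < l → η l c < η i c := by
    rintro l (hl | hl)
    · have h := key l i j hl hij
      rw [← h1, sub_self, zero_mul] at h
      have := pos_of_mul_pos_left h (sub_nonneg.2 (hpmono hij).le)
      linarith
    · have h := key i j l hij hl
      rw [← h1, sub_self, zero_mul] at h
      have e1 := hpmono hij
      by_contra! hcon
      have := mul_nonneg (sub_nonneg.2 hcon) (sub_nonneg.2 e1.le)
      linarith
  have h4 : (Finset.univ.filter (fun l : Fin M => η l c < η i c)).card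
      = (i : ℕ) + (M - 1 - (j : ℕ)) := by
    have hset : Finset.univ.filter (fun l : Fin M => η l c < η i c)
        = Finset.Iio i ∪ Finset.Ioi j := by
      ext l
      simp only [Finset.mem_filter, Finset.mem_univ, true_and, Finset.mem_union,
        Finset.mem_Iio, Finset.mem_Ioi]
      refine ⟨fun h => ?_, h3 l⟩
      by_contra! hcon
      rcases hcon.1.eq_or_lt with e | e
      · subst e; exact lt_irrefl _ h
      · rcases hcon.2.eq_or_lt with e' | e'
        · subst e'; rw [h1] at h; exact lt_irrefl _ h
        · exact lt_asymm h (h2 l e e')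
    rw [hset, Finset.card_union_of_disjoint, Fin.card_Iio, Fin.card_Ioi]
    rw [Finset.disjoint_left]
    intro l hl hl'
    rw [Finset.mem_Iio] at hl
    rw [Finset.mem_Ioi] at hl'
    exact lt_asymm (hl.trans hij) hl'
  refine ⟨h1, h2, h3, h4, fun s => ?_⟩
  rw [h4]
  have := j.isLt
  omega
end

section
/- Let 1 ≤ N ≤ M−1. For each i with 1 ≤ i ≤ M−N: (a) for every ξ ∈ ℝ the limit W_i(ξ) := lim_{n→+∞, n∈ℤ} w_n( c_{i,N+i}·n + ξ ) exists; (b) lim_{ξ→+∞} W_i(ξ) = Σ_{j=i+1}^{N+i} p_j and lim_{ξ→−∞} W_i(ξ) = Σ_{j=i}^{N+i−1} p_j. -/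
open scoped Classical

lemma aux_dom {I X : Type*} [Fintype I] (l : Filter X) (s : X → ℝ)
    (hs : Filter.Tendsto s l Filter.atTop) (b d : I → ℝ) (h : ∀ k, b k ≠ 0 → d k ≤ 0) :
    Filter.Tendsto (fun x => ∑ k, b k * Real.exp (s x * d k)) l
      (nhds (∑ k, if d k = 0 then b k else 0)) := by
  apply tendsto_finsetSum
  intro k _
  by_cases hb : b k = 0
  · simpa [hb] using tendsto_const_nhds
  by_cases hd : d k = 0
  · simpa [hd] using tendsto_const_nhds
  · have hlt : d k < 0 := lt_of_le_of_ne (h k hb) hd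
    simp only [hd, if_false]
    have h1 : Filter.Tendsto (fun x => s x * d k) l Filter.atBot :=
      hs.atTop_mul_const_of_neg hlt
    simpa using (Real.tendsto_exp_atBot.comp h1).const_mul (b k)

lemma aux_ratio {I X : Type*} [Fintype I] (l : Filter X) (s : X → ℝ)
    (hs : Filter.Tendsto s l Filter.atTop) (a d P : I → ℝ) (ha : ∀ k, 0 ≤ a k)
    (h : ∀ k, a k ≠ 0 → d k ≤ 0) (k0 : I) (hk0 : 0 < a k0) (hd0 : d k0 = 0) :
    Filter.Tendsto (fun x => (∑ k, a k * P k * Real.exp (s x * d k)) /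
        (∑ k, a k * Real.exp (s x * d k))) l
      (nhds ((∑ k, if d k = 0 then a k * P k else 0) / (∑ k, if d k = 0 then a k else 0))) := by
  apply Filter.Tendsto.div
  · apply aux_dom l s hs (fun k => a k * P k) d
    intro k hk
    exact h k (left_ne_zero_of_mul hk)
  · exact aux_dom l s hs a d h
  · apply ne_of_gt
    apply Finset.sum_pos'
    · intro k _
      split_ifs
      · exact ha k
      · exact le_rfl
    · exact ⟨k0, Finset.mem_univ _, by simp [hd0, hk0]⟩

lemma aux_ratio_scale {I : Type*} [Fintype I] (a P e : I → ℝ) (E : ℝ) :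
    (∑ k, a k * P k * Real.exp (e k)) / (∑ k, a k * Real.exp (e k)) =
    (∑ k, a k * P k * Real.exp (e k - E)) / (∑ k, a k * Real.exp (e k - E)) := by
  have h1 : ∀ b : I → ℝ, ∑ k, b k * Real.exp (e k - E) =
      (∑ k, b k * Real.exp (e k)) * Real.exp (-E) := by
    intro b
    rw [Finset.sum_mul]
    refine Finset.sum_congr rfl fun k _ => ?_
    rw [sub_eq_add_neg, Real.exp_add]; ring
  rw [h1 a, h1 (fun k => a k * P k), mul_div_mul_right _ _ (Real.exp_pos _).ne']

lemma aux_const {I X : Type*} [Fintype I] (l : Filter X) (s x : X → ℝ)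
    (hs : Filter.Tendsto s l Filter.atTop) (a d P : I → ℝ) (ha : ∀ k, 0 ≤ a k)
    (h : ∀ k, a k ≠ 0 → d k ≤ 0) (k0 : I) (hk0 : 0 < a k0) (hd0 : d k0 = 0)
    (hP : ∀ k, d k = 0 → P k = P k0) (hx : ∀ k y, s y * d k = P k * x y - P k0 * x y) :
    Filter.Tendsto (fun y => (∑ k, a k * P k * Real.exp (P k * x y)) /
        (∑ k, a k * Real.exp (P k * x y))) l (nhds (P k0)) := by
  have := aux_ratio l s hs a d P ha h k0 hk0 hd0
  have e1 : (∑ k, if d k = 0 then a k * P k else 0) =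
      (∑ k, if d k = 0 then a k else 0) * P k0 := by
    rw [Finset.sum_mul]
    refine Finset.sum_congr rfl fun k _ => ?_
    split_ifs with hd
    · rw [hP k hd]
    · simp
  have e2 : (∑ k, if d k = 0 then a k else 0) ≠ 0 := by
    apply ne_of_gt
    apply Finset.sum_pos'
    · intro k _
      split_ifs
      · exact ha k
      · exact le_rfl
    · exact ⟨k0, Finset.mem_univ _, by simp [hd0, hk0]⟩
  rw [e1, mul_div_cancel_left₀ _ e2] at this
  refine this.congr fun y => ?_
  rw [aux_ratio_scale a P (fun k => P k * x y) (P k0 * x y)]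
  simp only [hx]

lemma aux_main {I : Type*} [Fintype I] (a L P : I → ℝ) (c E : ℝ) (α β : I)
    (ha : ∀ k, 0 ≤ a k) (hα : 0 < a α) (hβ : 0 < a β)
    (hEα : L α + c * P α = E) (hEβ : L β + c * P β = E) (hP : P α ≤ P β)
    (h : ∀ k, a k ≠ 0 → k ≠ α → k ≠ β → L k + c * P k < E) :
    ∃ W : ℝ → ℝ,
      (∀ ξ : ℝ, Filter.Tendsto (fun n : ℤ =>
        deriv (fun y => Real.log (∑ k, a k * Real.exp (n * L k + P k * y))) (c * (n : ℝ) + ξ))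
        Filter.atTop (nhds (W ξ))) ∧
      Filter.Tendsto W Filter.atTop (nhds (P β)) ∧
      Filter.Tendsto W Filter.atBot (nhds (P α)) := by
  set d : I → ℝ := fun k => L k + c * P k - E with hd
  have hdα : d α = 0 := by simp [hd, hEα]
  have hdβ : d β = 0 := by simp [hd, hEβ]
  set aR : I → ℝ := fun k => if d k = 0 then a k else 0 with haR
  have haRnn : ∀ k, 0 ≤ aR k := by
    intro k
    simp only [haR]
    split_ifs
    · exact ha k
    · exact le_rfl
  have hsupp : ∀ k, aR k ≠ 0 → k = α ∨ k = β := by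
    intro k hk
    by_contra! hc
    by_cases hdk : d k = 0
    · have hkk : a k ≠ 0 := by simpa [haR, hdk] using hk
      have := h k hkk hc.1 hc.2
      simp only [hd] at hdk
      linarith
    · simp [haR, hdk] at hk
  have haRα : 0 < aR α := by simp [haR, hdα, hα]
  have haRβ : 0 < aR β := by simp [haR, hdβ, hβ]
  refine ⟨fun ξ => (∑ k, aR k * P k * Real.exp (P k * ξ)) / (∑ k, aR k * Real.exp (P k * ξ)),
    ?_, ?_, ?_⟩
  · intro ξ
    have hs : Filter.Tendsto (fun n : ℤ => (n : ℝ)) Filter.atTop Filter.atTop :=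
      tendsto_intCast_atTop_atTop
    have key := aux_ratio Filter.atTop (fun n : ℤ => (n : ℝ)) hs
      (fun k => a k * Real.exp (P k * ξ)) d P
      (fun k => mul_nonneg (ha k) (Real.exp_pos _).le) ?_ α (mul_pos hα (Real.exp_pos _)) hdα
    · have e1 : (∑ k, aR k * P k * Real.exp (P k * ξ)) =
          ∑ k, if d k = 0 then a k * Real.exp (P k * ξ) * P k else 0 := by
        refine Finset.sum_congr rfl fun k _ => ?_
        simp only [haR]
        split_ifs
        · ring
        · ring
      have e2 : (∑ k, aR k * Real.exp (P k * ξ)) =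
          ∑ k, if d k = 0 then a k * Real.exp (P k * ξ) else 0 := by
        refine Finset.sum_congr rfl fun k _ => ?_
        simp only [haR]
        split_ifs
        · ring
        · ring
      beta_reduce
      rw [e1, e2]
      refine key.congr fun n => ?_
      have hpos : 0 < ∑ k, a k * Real.exp (n * L k + P k * (c * (n : ℝ) + ξ)) := by
        apply Finset.sum_pos'
        · intro k _
          exact mul_nonneg (ha k) (Real.exp_pos _).le
        · exact ⟨α, Finset.mem_univ _, mul_pos hα (Real.exp_pos _)⟩
      have hder : HasDerivAt (fun y => ∑ k, a k * Real.exp (n * L k + P k * y))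
          (∑ k, a k * P k * Real.exp (n * L k + P k * (c * (n : ℝ) + ξ))) (c * (n : ℝ) + ξ) := by
        apply HasDerivAt.fun_sum
        intro k _
        have h0 : HasDerivAt (fun y => (n : ℝ) * L k + P k * y) (P k) (c * (n : ℝ) + ξ) := by
          simpa using ((hasDerivAt_id (c * (n : ℝ) + ξ)).const_mul (P k)).const_add ((n : ℝ) * L k)
        have h1 := h0.exp.const_mul (a k)
        exact h1.congr_deriv (by ring)
      rw [(hder.log hpos.ne').deriv, aux_ratio_scale a P _ ((n : ℝ) * E)]
      have e3 : ∀ k, Real.exp (n * L k + P k * (c * (n : ℝ) + ξ) - n * E) =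
          Real.exp (P k * ξ) * Real.exp (n * d k) := by
        intro k
        rw [← Real.exp_add]
        congr 1
        simp only [hd]; ring
      simp only [e3]
      congr 1
      · refine Finset.sum_congr rfl fun k _ => ?_
        ring
      · refine Finset.sum_congr rfl fun k _ => ?_
        ring
    · intro k hk
      by_cases h1 : k = α
      · rw [h1, hdα]
      by_cases h2 : k = β
      · rw [h2, hdβ]
      have := h k (left_ne_zero_of_mul hk) h1 h2
      simp only [hd]; linarith
  · apply aux_const Filter.atTop id id Filter.tendsto_id aR (fun k => P k - P β) P haRnn _ β haRβ
    · simp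
    · intro k hk; linarith
    · intro k y; simp only [id]; ring
    · intro k hk
      rcases hsupp k hk with rfl | rfl
      · simpa using hP
      · simp
  · apply aux_const Filter.atBot (fun x => -x) id Filter.tendsto_neg_atBot_atTop aR
      (fun k => P α - P k) P haRnn _ α haRα
    · simp
    · intro k hk; linarith
    · intro k y; simp only [id]; ring
    · intro k hk
      rcases hsupp k hk with rfl | rfl
      · simp
      · simpa using hP

lemma aux_comb {J : Type*} [Fintype J] [DecidableEq J] (h : J → ℝ) (T S : Finset J) (u v : J)
    (hu : u ∉ T) (hv : v ∉ T) (hT : ∀ j ∈ T, 0 < h j) (hu0 : h u = 0) (hv0 : h v = 0)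
    (hout : ∀ j, j ∉ T → j ≠ u → j ≠ v → h j < 0)
    (hcard : S.card = T.card + 1) (h1 : S ≠ insert u T) (h2 : S ≠ insert v T) :
    ∑ j ∈ S, h j < ∑ j ∈ T, h j := by
  have hle : ∀ j, j ∉ T → h j ≤ 0 := by
    intro j hj
    by_cases e1 : j = u
    · rw [e1, hu0]
    by_cases e2 : j = v
    · rw [e2, hv0]
    exact (hout j hj e1 e2).le
  have hS : ∑ j ∈ S, h j = ∑ j ∈ S ∩ T, h j + ∑ j ∈ S \ T, h j :=
    (Finset.sum_inter_add_sum_sdiff S T h).symm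
  have hTs : ∑ j ∈ T, h j = ∑ j ∈ T ∩ S, h j + ∑ j ∈ T \ S, h j :=
    (Finset.sum_inter_add_sum_sdiff T S h).symm
  rw [Finset.inter_comm] at hTs
  have k1 : ∑ j ∈ S \ T, h j ≤ 0 :=
    Finset.sum_nonpos fun j hj => hle j (Finset.mem_sdiff.mp hj).2
  have k2 : 0 ≤ ∑ j ∈ T \ S, h j :=
    Finset.sum_nonneg fun j hj => (hT j (Finset.mem_sdiff.mp hj).1).le
  by_cases hTS : T ⊆ S
  · have hc : (S \ T).card = 1 := by
      rw [Finset.card_sdiff_of_subset hTS]; omega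
    obtain ⟨x, hx⟩ := Finset.card_eq_one.mp hc
    have hSx : S = insert x T := by
      rw [← Finset.sdiff_union_of_subset hTS, hx]; rfl
    have hxT : x ∉ T := by
      have : x ∈ S \ T := by simp [hx]
      exact (Finset.mem_sdiff.mp this).2
    have := hout x hxT (fun e => h1 (e ▸ hSx)) (fun e => h2 (e ▸ hSx))
    rw [hx, Finset.sum_singleton] at hS
    linarith
  · obtain ⟨x, hxT, hxS⟩ := Finset.not_subset.mp hTS
    have : 0 < ∑ j ∈ T \ S, h j :=
      Finset.sum_pos (fun j hj => hT j (Finset.mem_sdiff.mp hj).1)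
        ⟨x, Finset.mem_sdiff.mpr ⟨hxT, hxS⟩⟩
    linarith

/-- chord comparison for `log x + c x` -/
lemma aux_log (x y c : ℝ) (hx : 0 < x) (hxy : x < y)
    (hc : Real.log x + c * x = Real.log y + c * y) (z : ℝ) (hz : 0 < z) :
    (x < z → z < y → Real.log x + c * x < Real.log z + c * z) ∧
    (z < x → Real.log z + c * z < Real.log x + c * x) ∧
    (y < z → Real.log z + c * z < Real.log x + c * x) := by
  have sc := strictConcaveOn_log_Ioi
  have hy : 0 < y := hx.trans hxy
  have hcc : (Real.log y - Real.log x) / (y - x) = -c := by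
    rw [div_eq_iff (by linarith)]; linarith
  refine ⟨fun h1 h2 => ?_, fun h1 => ?_, fun h1 => ?_⟩
  · have := sc.slope_anti_adjacent (x := x) (y := z) (z := y) hx hy h1 h2
    rw [div_lt_div_iff₀ (by linarith) (by linarith)] at this
    have hl : Real.log y = Real.log x + c * x - c * y := by linarith
    rw [hl] at this
    nlinarith
  · have := sc.slope_anti_adjacent (x := z) (y := x) (z := y) hz hy h1 hxy
    rw [hcc, lt_div_iff₀ (by linarith)] at this
    nlinarith
  · have := sc.slope_anti_adjacent (x := x) (y := y) (z := z) hx hz hxy h1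
    rw [hcc, div_lt_iff₀ (by linarith)] at this
    nlinarith

/-- asymptotics of `w_n(x) = ∂/∂x log τ_n^{(N)}(x)` as `n → +∞`
along the line `x = c_{i,N+i}·n + ξ`: the limit `W_i(ξ)` exists for every
`ξ ∈ ℝ`, and `W_i(ξ) → Σ_{j=i+1}^{N+i} p_j` as `ξ → +∞`,
`W_i(ξ) → Σ_{j=i}^{N+i−1} p_j` as `ξ → −∞`.  (Indices are 0-based.) -/
theorem stmt_8 (M N : ℕ) (hM : 1 ≤ M) (hN : 1 ≤ N) (hNM : N ≤ M - 1)
    (p : Fin M → ℝ) (hp : ∀ j, 0 < p j) (hpmono : StrictMono p)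
    (θ0 : Fin M → ℝ) (t : ℝ)
    (i : ℕ) (hi : i + N < M) :
    let θ : Fin M → ℤ → ℝ → ℝ := fun j n x =>
      (n : ℝ) * Real.log (p j) + p j * x - t / p j + θ0 j
    let τ : ℤ → ℝ → ℝ := fun n x =>
      ∑ ι : Fin N → Fin M,
        if StrictMono ι then
          (∏ a : Fin N, ∏ b : Fin N, if a < b then (p (ι a) - p (ι b)) ^ 2 else 1) *
            Real.exp (∑ j, θ (ι j) n x)
        else 0
    let w : ℤ → ℝ → ℝ := fun n x => deriv (fun y => Real.log (τ n y)) x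
    let c : ℝ := -(Real.log (p ⟨i, by omega⟩) - Real.log (p ⟨i + N, hi⟩)) /
      (p ⟨i, by omega⟩ - p ⟨i + N, hi⟩)
    ∃ W : ℝ → ℝ,
      (∀ ξ : ℝ,
        Filter.Tendsto (fun n : ℤ => w n (c * (n : ℝ) + ξ)) Filter.atTop (nhds (W ξ))) ∧
      Filter.Tendsto W Filter.atTop
        (nhds (∑ j ∈ Finset.univ.filter
          (fun j : Fin M => i + 1 ≤ (j : ℕ) ∧ (j : ℕ) < i + N + 1), p j)) ∧
      Filter.Tendsto W Filter.atBot
        (nhds (∑ j ∈ Finset.univ.filter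
          (fun j : Fin M => i ≤ (j : ℕ) ∧ (j : ℕ) < i + N), p j)) := by
  intro θ τ w c
  set u : Fin M := ⟨i, by omega⟩ with hu
  set v : Fin M := ⟨i + N, hi⟩ with hv
  have huv : p u < p v := hpmono (by simp only [hu, hv, Fin.mk_lt_mk]; omega)
  have hc : Real.log (p u) + c * p u = Real.log (p v) + c * p v := by
    have hne : p u - p v ≠ 0 := by linarith
    have : c * (p u - p v) = -(Real.log (p u) - Real.log (p v)) := by
      simp only [c]
      exact div_mul_cancel₀ _ hne
    linarith
  set α : Fin N → Fin M := fun a => ⟨i + a, by omega⟩ with hα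
  set β : Fin N → Fin M := fun a => ⟨i + 1 + a, by omega⟩ with hβ
  have hαm : StrictMono α := fun a b hab => by
    simp only [hα, Fin.mk_lt_mk]; have : (a : ℕ) < b := hab; omega
  have hβm : StrictMono β := fun a b hab => by
    simp only [hβ, Fin.mk_lt_mk]; have : (a : ℕ) < b := hab; omega
  set T : Finset (Fin M) := Finset.univ.filter
    (fun j : Fin M => i < (j : ℕ) ∧ (j : ℕ) < i + N) with hT
  have huT : u ∉ T := by simp [hT, hu]
  have hvT : v ∉ T := by simp [hT, hv]
  have hαS : Finset.univ.image α = insert u T := by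
    ext j
    simp only [Finset.mem_image, Finset.mem_univ, true_and, Finset.mem_insert, hT,
      Finset.mem_filter, hα, hu, Fin.ext_iff]
    constructor
    · rintro ⟨a, ha⟩; omega
    · intro h; exact ⟨⟨j - i, by omega⟩, by simp only []; omega⟩
  have hβS : Finset.univ.image β = insert v T := by
    ext j
    simp only [Finset.mem_image, Finset.mem_univ, true_and, Finset.mem_insert, hT,
      Finset.mem_filter, hβ, hv, Fin.ext_iff]
    constructor
    · rintro ⟨a, ha⟩; omega
    · intro h; exact ⟨⟨j - (i + 1), by omega⟩, by simp only []; omega⟩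
  have himg : ∀ (ι : Fin N → Fin M), StrictMono ι → ∀ f : Fin M → ℝ,
      ∑ j, f (ι j) = ∑ j ∈ Finset.univ.image ι, f j := by
    intro ι hι f
    rw [Finset.sum_image hι.injective.injOn]
  have hcardimg : ∀ (ι : Fin N → Fin M), StrictMono ι → (Finset.univ.image ι).card = N := by
    intro ι hι
    rw [Finset.card_image_of_injective _ hι.injective]; simp
  have hTcard : T.card + 1 = N := by
    rw [← hcardimg α hαm, hαS, Finset.card_insert_of_notMem huT]
  have huniq : ∀ (ι κ : Fin N → Fin M), StrictMono ι → StrictMono κ →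
      Finset.univ.image ι = Finset.univ.image κ → ι = κ := by
    intro ι κ hι hκ h
    apply (StrictMono.range_inj hι hκ).mp
    have := congrArg (fun s : Finset (Fin M) => (s : Set (Fin M))) h
    simpa using this
  set D : (Fin N → Fin M) → ℝ := fun ι =>
    ∏ a : Fin N, ∏ b : Fin N, if a < b then (p (ι a) - p (ι b)) ^ 2 else 1 with hD
  have hDpos : ∀ ι, StrictMono ι → 0 < D ι := by
    intro ι hι
    refine Finset.prod_pos fun a _ => Finset.prod_pos fun b _ => ?_
    split_ifs with hab
    · have := hpmono (hι hab)
      have : p (ι a) - p (ι b) ≠ 0 := by linarith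
      positivity
    · exact one_pos
  set A : (Fin N → Fin M) → ℝ := fun ι =>
    if StrictMono ι then D ι * Real.exp (∑ j, (- t / p (ι j) + θ0 (ι j))) else 0 with hA
  have hApos : ∀ ι, StrictMono ι → 0 < A ι := by
    intro ι hι
    simp only [hA, if_pos hι]
    exact mul_pos (hDpos ι hι) (Real.exp_pos _)
  set L : (Fin N → Fin M) → ℝ := fun ι => ∑ j, Real.log (p (ι j)) with hL
  set P : (Fin N → Fin M) → ℝ := fun ι => ∑ j, p (ι j) with hP
  have hτ : ∀ n x, τ n x = ∑ ι, A ι * Real.exp (n * L ι + P ι * x) := by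
    intro n x
    simp only [τ]
    refine Finset.sum_congr rfl fun ι _ => ?_
    simp only [hA]
    split_ifs with hι
    · rw [mul_assoc, ← Real.exp_add]
      congr 2
      simp only [hL, hP, θ, Finset.mul_sum, Finset.sum_mul, ← Finset.sum_add_distrib]
      refine Finset.sum_congr rfl fun j _ => ?_
      ring
    · simp
  set s0 : ℝ := Real.log (p u) + c * p u with hs0
  set h : Fin M → ℝ := fun j => Real.log (p j) + c * p j - s0 with hh
  have hEsum : ∀ ι, StrictMono ι → L ι + c * P ι =
      N * s0 + ∑ j ∈ Finset.univ.image ι, h j := by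
    intro ι hι
    rw [← himg ι hι]
    simp only [hL, hP, hh, Finset.sum_sub_distrib, Finset.sum_add_distrib, Finset.mul_sum]
    simp
  have hu0 : h u = 0 := by simp [hh, hs0]
  have hv0 : h v = 0 := by simp only [hh]; linarith
  have hlog := fun j => aux_log (p u) (p v) c (hp u) huv hc (p j) (hp j)
  have hTp : ∀ j ∈ T, 0 < h j := by
    intro j hj
    simp only [hT, Finset.mem_filter, Finset.mem_univ, true_and] at hj
    have := (hlog j).1 (hpmono (by simp only [hu, Fin.lt_def]; omega))
      (hpmono (by simp only [hv, Fin.lt_def]; omega))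
    simp only [hh]; linarith
  have hout : ∀ j, j ∉ T → j ≠ u → j ≠ v → h j < 0 := by
    intro j hj h1 h2
    simp only [hT, Finset.mem_filter, Finset.mem_univ, true_and] at hj
    simp only [hu, hv, ne_eq, Fin.ext_iff] at h1 h2
    rcases lt_or_ge (j : ℕ) i with hlt | hge
    · have := (hlog j).2.1 (hpmono (by simp only [hu, Fin.lt_def]; omega))
      simp only [hh]; linarith
    · have := (hlog j).2.2 (hpmono (by simp only [hv, Fin.lt_def]; omega))
      simp only [hh]; linarith
  have main := aux_main A L P c (N * s0 + ∑ j ∈ T, h j) α β ?_ (hApos α hαm) (hApos β hβm)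
    ?_ ?_ ?_ ?_
  · obtain ⟨W, hW1, hW2, hW3⟩ := main
    refine ⟨W, ?_, ?_, ?_⟩
    · intro ξ
      simp only [w, hτ]
      exact hW1 ξ
    · convert hW2 using 2
      simp only [hP]
      rw [himg β hβm p, hβS]
      refine Finset.sum_congr ?_ fun _ _ => rfl
      ext j
      simp only [Finset.mem_insert, hT, Finset.mem_filter, Finset.mem_univ, true_and, hv,
        Fin.ext_iff]
      omega
    · convert hW3 using 2
      simp only [hP]
      rw [himg α hαm p, hαS]
      refine Finset.sum_congr ?_ fun _ _ => rfl
      ext j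
      simp only [Finset.mem_insert, hT, Finset.mem_filter, Finset.mem_univ, true_and, hu,
        Fin.ext_iff]
      omega
  · intro ι
    by_cases hι : StrictMono ι
    · exact (hApos ι hι).le
    · simp [hA, hι]
  · rw [hEsum α hαm, hαS, Finset.sum_insert huT, hu0, zero_add]
  · rw [hEsum β hβm, hβS, Finset.sum_insert hvT, hv0, zero_add]
  · simp only [hP]
    refine Finset.sum_le_sum fun a _ => hpmono.monotone ?_
    simp only [hα, hβ, Fin.mk_le_mk]; omega
  · intro ι hAι h1 h2
    have hι : StrictMono ι := by
      by_contra hn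
      simp [hA, hn] at hAι
    rw [hEsum ι hι]
    have := aux_comb h T (Finset.univ.image ι) u v huT hvT hTp hu0 hv0 hout
      (by rw [hcardimg ι hι, hTcard])
      (fun e => h1 (huniq ι α hι hαm (by rw [e, hαS])))
      (fun e => h2 (huniq ι β hι hβm (by rw [e, hβS])))
    linarith
end

section
/- Let 1 ≤ N ≤ M−1. For each i with 1 ≤ i ≤ N: (a) for every ξ ∈ ℝ the limit W_i(ξ) := lim_{n→−∞, n∈ℤ} w_n( c_{i,M−N+i}·n + ξ ) exists; (b) lim_{ξ→+∞} W_i(ξ) = Σ_{j=1}^{i−1} p_j + Σ_{j=1}^{N−i+1} p_{M−j+1} and lim_{ξ→−∞} W_i(ξ) = Σ_{j=1}^{i} p_j + Σ_{j=1}^{N−i} p_{M−j+1}. -/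
open scoped Classical

lemma ratio_limit {α ι : Type*} (s T : Finset α) (hTs : T ⊆ s) (hT : T.Nonempty)
    (P D F : α → ℝ) (hD : ∀ a, a ∈ s → 0 < D a) (m : ℝ) (hF : ∀ a ∈ T, F a = m)
    (hF' : ∀ a ∈ s, a ∉ T → F a < m) (l : Filter ι) (r : ι → ℝ)
    (hr : Filter.Tendsto r l Filter.atTop) :
    Filter.Tendsto (fun n => (∑ a ∈ s, P a * (D a * Real.exp (r n * F a))) /
      (∑ a ∈ s, D a * Real.exp (r n * F a))) l
      (nhds ((∑ a ∈ T, P a * D a) / ∑ a ∈ T, D a)) := by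
  have key : ∀ Q : α → ℝ, Filter.Tendsto
      (fun n => ∑ a ∈ s, Q a * (D a * Real.exp (r n * (F a - m)))) l
      (nhds (∑ a ∈ T, Q a * D a)) := by
    intro Q
    have e : ∑ a ∈ T, Q a * D a = ∑ a ∈ s, if a ∈ T then Q a * D a else 0 := by
      rw [← Finset.sum_filter]
      congr 1
      ext a
      simp only [Finset.mem_filter]
      exact ⟨fun h => ⟨hTs h, h⟩, fun h => h.2⟩
    rw [e]
    refine tendsto_finsetSum _ fun a ha => ?_
    by_cases h : a ∈ T
    · simp only [h, if_true, hF a h, sub_self, mul_zero, Real.exp_zero, mul_one]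
      exact tendsto_const_nhds
    · simp only [h, if_false]
      have h1 : Filter.Tendsto (fun n => r n * (F a - m)) l Filter.atBot :=
        hr.atTop_mul_const_of_neg (sub_neg.2 (hF' a ha h))
      have h2 := (Real.tendsto_exp_atBot.comp h1).const_mul (Q a * D a)
      simpa [mul_assoc, Function.comp_def] using h2
  have hpos : 0 < ∑ a ∈ T, D a := Finset.sum_pos (fun a ha => hD a (hTs ha)) hT
  have k1 := key P
  have k2 := key (fun _ => 1)
  simp only [one_mul] at k2
  refine (k1.div k2 hpos.ne').congr fun n => ?_
  have e1 : ∀ a, Real.exp (r n * F a) = Real.exp (r n * m) * Real.exp (r n * (F a - m)) := by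
    intro a
    rw [← Real.exp_add]
    ring_nf
  have e2 : ∑ a ∈ s, P a * (D a * Real.exp (r n * F a)) =
      Real.exp (r n * m) * ∑ a ∈ s, P a * (D a * Real.exp (r n * (F a - m))) := by
    rw [Finset.mul_sum]
    exact Finset.sum_congr rfl fun a _ => by rw [e1]; ring
  have e3 : ∑ a ∈ s, D a * Real.exp (r n * F a) =
      Real.exp (r n * m) * ∑ a ∈ s, D a * Real.exp (r n * (F a - m)) := by
    rw [Finset.mul_sum]
    exact Finset.sum_congr rfl fun a _ => by rw [e1]; ring
  rw [e2, e3]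
  exact (mul_div_mul_left _ _ (Real.exp_ne_zero _)).symm

lemma deriv_log_sum {α : Type*} (s : Finset α) (hs : s.Nonempty) (C P K : α → ℝ)
    (hC : ∀ a ∈ s, 0 < C a) (x : ℝ) :
    deriv (fun y => Real.log (∑ a ∈ s, C a * Real.exp (P a * y + K a))) x =
      (∑ a ∈ s, P a * (C a * Real.exp (P a * x + K a))) /
        ∑ a ∈ s, C a * Real.exp (P a * x + K a) := by
  have hpos : 0 < ∑ a ∈ s, C a * Real.exp (P a * x + K a) :=
    Finset.sum_pos (fun a ha => mul_pos (hC a ha) (Real.exp_pos _)) hs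
  have h : HasDerivAt (fun y => ∑ a ∈ s, C a * Real.exp (P a * y + K a))
      (∑ a ∈ s, P a * (C a * Real.exp (P a * x + K a))) x := by
    refine HasDerivAt.fun_sum fun a _ => ?_
    have h1 : HasDerivAt (fun y => P a * y + K a) (P a) x := by
      simpa using ((hasDerivAt_id x).const_mul (P a)).add_const (K a)
    exact (h1.exp.const_mul (C a)).congr_deriv (by ring)
  exact (h.log hpos.ne').deriv

lemma abstract_limit {α : Type*} (s : Finset α) (A B : α) (hA : A ∈ s) (hB : B ∈ s)
    (C L P K : α → ℝ) (hC : ∀ a ∈ s, 0 < C a) (c : ℝ)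
    (hAB : L A + c * P A = L B + c * P B)
    (hmin : ∀ a ∈ s, a ≠ A → a ≠ B → L A + c * P A < L a + c * P a)
    (hP : P A < P B) :
    ∃ W : ℝ → ℝ,
      (∀ ξ : ℝ, Filter.Tendsto (fun n : ℤ => deriv (fun y => Real.log
        (∑ a ∈ s, C a * Real.exp (P a * y + (n * L a + K a)))) (c * (n : ℝ) + ξ))
        Filter.atBot (nhds (W ξ))) ∧
      Filter.Tendsto W Filter.atTop (nhds (P B)) ∧
      Filter.Tendsto W Filter.atBot (nhds (P A)) := by
  have hsub : ({A, B} : Finset α) ⊆ s := by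
    intro a ha
    simp only [Finset.mem_insert, Finset.mem_singleton] at ha
    rcases ha with rfl | rfl <;> assumption
  have hne : A ≠ B := fun h => by rw [h] at hP; exact lt_irrefl _ hP
  refine ⟨fun ξ => (∑ a ∈ ({A, B} : Finset α), P a * ((C a * Real.exp (K a)) *
    Real.exp (ξ * P a))) / ∑ a ∈ ({A, B} : Finset α), (C a * Real.exp (K a)) *
    Real.exp (ξ * P a), ?_, ?_, ?_⟩
  · intro ξ
    have hr : Filter.Tendsto (fun n : ℤ => -(n : ℝ)) Filter.atBot Filter.atTop :=
      Filter.tendsto_neg_atBot_atTop.comp (tendsto_intCast_atBot_iff.2 Filter.tendsto_id)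
    have := ratio_limit s {A, B} hsub ⟨A, by simp⟩ P
      (fun a => (C a * Real.exp (K a)) * Real.exp (ξ * P a)) (fun a => -(L a + c * P a))
      (fun a ha => mul_pos (mul_pos (hC a ha) (Real.exp_pos _)) (Real.exp_pos _))
      (-(L A + c * P A))
      (by
        intro a ha
        simp only [Finset.mem_insert, Finset.mem_singleton] at ha
        rcases ha with rfl | rfl
        · rfl
        · simp only [hAB])
      (by
        intro a ha hn
        simp only [Finset.mem_insert, Finset.mem_singleton, not_or] at hn
        exact neg_lt_neg (hmin a ha hn.1 hn.2)) _ _ hr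
    refine this.congr fun n => ?_
    rw [deriv_log_sum s ⟨A, hA⟩ C P (fun a => n * L a + K a) hC]
    have e : ∀ a, C a * Real.exp (K a) * Real.exp (ξ * P a) *
        Real.exp (-(n : ℝ) * -(L a + c * P a)) =
        C a * Real.exp (P a * (c * n + ξ) + (n * L a + K a)) := by
      intro a
      rw [mul_assoc, mul_assoc, ← Real.exp_add, ← Real.exp_add]
      congr 2
      ring
    simp only [e]
  · have := ratio_limit {A, B} {B} (by simp) ⟨B, by simp⟩ P
      (fun a => C a * Real.exp (K a)) P
      (fun a ha => mul_pos (hC a (hsub ha)) (Real.exp_pos _)) (P B) (by simp)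
      (by
        intro a ha hn
        simp only [Finset.mem_insert, Finset.mem_singleton] at ha hn
        rcases ha with rfl | rfl
        · exact hP
        · exact absurd rfl hn) _ _ (Filter.tendsto_id)
    have e : P B * (C B * Real.exp (K B)) / (C B * Real.exp (K B)) = P B :=
      mul_div_cancel_right₀ _ (mul_pos (hC B hB) (Real.exp_pos _)).ne'
    simp only [Finset.sum_singleton] at this
    rw [e] at this
    exact this
  · have := ratio_limit {A, B} {A} (by simp) ⟨A, by simp⟩ P
      (fun a => C a * Real.exp (K a)) (fun a => - P a)
      (fun a ha => mul_pos (hC a (hsub ha)) (Real.exp_pos _)) (-P A) (by simp)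
      (by
        intro a ha hn
        simp only [Finset.mem_insert, Finset.mem_singleton] at ha hn
        rcases ha with rfl | rfl
        · exact absurd rfl hn
        · exact neg_lt_neg hP) _ _ (Filter.tendsto_neg_atBot_atTop)
    have e : P A * (C A * Real.exp (K A)) / (C A * Real.exp (K A)) = P A :=
      mul_div_cancel_right₀ _ (mul_pos (hC A hA) (Real.exp_pos _)).ne'
    simp only [Finset.sum_singleton] at this
    rw [e] at this
    simpa only [neg_mul_neg] using this

lemma fin_lower {M N : ℕ} (f : Fin N → Fin M) (hf : StrictMono f) (j : Fin N) :
    (j : ℕ) ≤ f j := by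
  obtain ⟨k, hk⟩ := j
  induction k with
  | zero => simp
  | succ k ih =>
    have h1 := ih (by omega)
    have h2 : f ⟨k, by omega⟩ < f ⟨k + 1, hk⟩ := hf (by simp)
    rw [Fin.lt_def] at h2
    simp only at h1 ⊢
    omega

lemma fin_upper {M N : ℕ} (f : Fin N → Fin M) (hf : StrictMono f) (j : Fin N) :
    (f j : ℕ) + N ≤ M + j := by
  have key : ∀ d : ℕ, ∀ k (hk : k < N), k + d + 1 = N → (f ⟨k, hk⟩ : ℕ) + d + 1 ≤ M := by
    intro d
    induction d with
    | zero => intro k hk _; have := (f ⟨k, hk⟩).2; omega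
    | succ d ih =>
      intro k hk he
      have h1 := ih (k + 1) (by omega) (by omega)
      have h2 : f ⟨k, hk⟩ < f ⟨k + 1, by omega⟩ := hf (by simp)
      rw [Fin.lt_def] at h2
      omega
  have := key (N - 1 - j) j j.2 (by omega)
  simp only [Fin.eta] at this
  omega

/-- the strictly increasing selection `0,…,k-1, M-N+k,…,M-1`. -/
def sel (M N : ℕ) (hNM : N ≤ M) (k : ℕ) : Fin N → Fin M := fun j =>
  if (j : ℕ) < k then ⟨j, by omega⟩ else ⟨M - N + j, by omega⟩

lemma sel_val (M N : ℕ) (hNM : N ≤ M) (k : ℕ) (j : Fin N) :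
    (sel M N hNM k j : ℕ) = if (j : ℕ) < k then (j : ℕ) else M - N + j := by
  unfold sel
  split_ifs <;> rfl

lemma sel_mono (M N : ℕ) (hNM : N ≤ M) (k : ℕ) : StrictMono (sel M N hNM k) := by
  intro a b h
  rw [Fin.lt_def] at h ⊢
  rw [sel_val, sel_val]
  split_ifs <;> omega

lemma sel_sum (M N : ℕ) (hNM : N ≤ M) (k : ℕ) (hk : k ≤ N) (p : Fin M → ℝ) :
    ∑ j, p (sel M N hNM k j) = ∑ j ∈ Finset.univ.filter
      (fun j : Fin M => (j : ℕ) < k ∨ M - N + k ≤ (j : ℕ)), p j := by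
  rw [← Finset.sum_image (s := Finset.univ) (g := sel M N hNM k) (f := p)
    (fun a _ b _ h => (sel_mono M N hNM k).injective h)]
  congr 1
  ext j
  simp only [Finset.mem_image, Finset.mem_univ, true_and, Finset.mem_filter]
  constructor
  · rintro ⟨a, rfl⟩
    rw [sel_val]
    split_ifs <;> omega
  · have hj := j.2
    rintro (h | h)
    · refine ⟨⟨j, by omega⟩, Fin.ext ?_⟩
      rw [sel_val]
      simp [h]
    · refine ⟨⟨j - (M - N), by omega⟩, Fin.ext ?_⟩
      rw [sel_val]
      simp only
      split_ifs <;> omega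

/-- pointwise minimality of the two dominant selections. -/
lemma pointwise_min (M N : ℕ) (hNM : N < M) (i : ℕ) (hi : i < N) (h : Fin M → ℝ)
    (hq : ∀ x y z, x < y → y < z → min (h x) (h z) < h y)
    (heq : h ⟨i, by omega⟩ = h ⟨M - N + i, by omega⟩)
    (f : Fin N → Fin M) (hf : StrictMono f) (j : Fin N) :
    h (sel M N hNM.le (i + 1) j) < h (f j) ∨
      (h (sel M N hNM.le (i + 1) j) = h (f j) ∧
      (f j = sel M N hNM.le (i + 1) j ∨ ((j : ℕ) = i ∧ f j = sel M N hNM.le i j))) := by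
  have hl := fin_lower f hf j
  have hu := fin_upper f hf j
  have hj := j.2
  by_cases hs : f j = sel M N hNM.le (i + 1) j
  · exact Or.inr ⟨by rw [hs], Or.inl hs⟩
  have hs' : (f j : ℕ) ≠ sel M N hNM.le (i + 1) j := fun e => hs (Fin.ext e)
  have hv := sel_val M N hNM.le (i + 1) j
  set i0 : Fin M := ⟨i, by omega⟩ with hi0
  set i1 : Fin M := ⟨M - N + i, by omega⟩ with hi1
  have v0 : (i0 : ℕ) = i := rfl
  have v1 : (i1 : ℕ) = M - N + i := rfl
  set S := sel M N hNM.le (i + 1) j with hS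
  rcases lt_trichotomy (j : ℕ) i with hji | hji | hji
  · left
    rw [if_pos (by omega)] at hv
    have q1 := hq S i0 i1 (by rw [Fin.lt_def]; omega) (by rw [Fin.lt_def]; omega)
    have q2 := hq S (f j) i1 (by rw [Fin.lt_def]; omega) (by rw [Fin.lt_def]; omega)
    rw [min_lt_iff] at q1 q2
    rcases q1 with q1 | q1 <;> rcases q2 with q2 | q2 <;> linarith
  · rw [if_pos (by omega)] at hv
    have hSi : S = i0 := Fin.ext (by omega)
    by_cases hb : f j = i1
    · right
      refine ⟨by rw [hSi, hb, heq], Or.inr ⟨hji, ?_⟩⟩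
      rw [hb]
      apply Fin.ext
      rw [sel_val, if_neg (by omega)]
      omega
    · left
      have hb' : (f j : ℕ) ≠ i1 := fun e => hb (Fin.ext e)
      have q2 := hq i0 (f j) i1 (by rw [Fin.lt_def]; omega) (by rw [Fin.lt_def]; omega)
      rw [← heq, min_self] at q2
      rwa [hSi]
  · left
    rw [if_neg (by omega)] at hv
    have q1 := hq i0 i1 S (by rw [Fin.lt_def]; omega) (by rw [Fin.lt_def]; omega)
    have q2 := hq i0 (f j) S (by rw [Fin.lt_def]; omega) (by rw [Fin.lt_def]; omega)
    rw [min_lt_iff] at q1 q2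
    rcases q1 with q1 | q1 <;> rcases q2 with q2 | q2 <;> linarith

lemma sum_min (M N : ℕ) (hNM : N < M) (i : ℕ) (hi : i < N) (h : Fin M → ℝ)
    (hq : ∀ x y z, x < y → y < z → min (h x) (h z) < h y)
    (heq : h ⟨i, by omega⟩ = h ⟨M - N + i, by omega⟩)
    (f : Fin N → Fin M) (hf : StrictMono f)
    (hA : f ≠ sel M N hNM.le (i + 1)) (hB : f ≠ sel M N hNM.le i) :
    ∑ j, h (sel M N hNM.le (i + 1) j) < ∑ j, h (f j) := by
  have pm := pointwise_min M N hNM i hi h hq heq f hf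
  refine Finset.sum_lt_sum (fun j _ => ?_) ?_
  · rcases pm j with h1 | h1
    · exact h1.le
    · exact h1.1.le
  · by_contra hcon
    push Not at hcon
    have h2 : ∀ j, f j = sel M N hNM.le (i + 1) j ∨
        ((j : ℕ) = i ∧ f j = sel M N hNM.le i j) := fun j => by
      rcases pm j with h1 | h1
      · exact absurd h1 (not_lt.2 (hcon j (Finset.mem_univ _)))
      · exact h1.2
    rcases h2 ⟨i, hi⟩ with h3 | ⟨-, h3⟩
    · apply hA
      funext j
      rcases h2 j with h4 | ⟨h4, -⟩
      · exact h4
      · have : j = ⟨i, hi⟩ := Fin.ext h4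
        rw [this, h3]
    · apply hB
      funext j
      rcases h2 j with h4 | ⟨h4, h5⟩
      · by_cases hj : (j : ℕ) = i
        · have : j = ⟨i, hi⟩ := Fin.ext hj
          rw [this, h3]
        · rw [h4]
          apply Fin.ext
          rw [sel_val, sel_val]
          split_ifs <;> omega
      · exact h5

lemma sel_diff (M N : ℕ) (hNM : N < M) (i : ℕ) (hi : i < N) (h : Fin M → ℝ) :
    ∑ j, h (sel M N hNM.le i j) - ∑ j, h (sel M N hNM.le (i + 1) j) =
      h ⟨M - N + i, by omega⟩ - h ⟨i, by omega⟩ := by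
  rw [← Finset.sum_sub_distrib, Finset.sum_eq_single (⟨i, hi⟩ : Fin N)]
  · congr 2 <;> · apply Fin.ext; rw [sel_val]; simp
  · intro j _ hj
    have hj' : (j : ℕ) ≠ i := fun e => hj (Fin.ext e)
    rw [sub_eq_zero]
    congr 1
    apply Fin.ext
    rw [sel_val, sel_val]
    split_ifs <;> omega
  · simp

lemma quasi (c x y z : ℝ) (hx : 0 < x) (hxy : x < y) (hyz : y < z) :
    min (Real.log x + c * x) (Real.log z + c * z) < Real.log y + c * y := by
  have hc : StrictConcaveOn ℝ (Set.Ioi 0) (fun u : ℝ => Real.log u + c * u) := by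
    refine strictConcaveOn_log_Ioi.add_concaveOn ?_
    exact ((LinearMap.mulLeft ℝ c).concaveOn (convex_Ioi 0))
  refine hc.lt_on_openSegment (x := x) (y := z) hx (hx.trans (hxy.trans hyz))
    (hxy.trans hyz).ne ?_
  rw [openSegment_eq_Ioo (hxy.trans hyz)]
  exact ⟨hxy, hyz⟩

/-- asymptotics of `w_n(x) = ∂/∂x log τ_n^{(N)}(x)` as `n → −∞`
along the line `x = c_{i,M−N+i}·n + ξ`: the limit `W_i(ξ)` exists for every
`ξ ∈ ℝ`, and `W_i(ξ) → Σ_{j=1}^{i−1} p_j + Σ_{j=1}^{N−i+1} p_{M−j+1}` as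
`ξ → +∞`, `W_i(ξ) → Σ_{j=1}^{i} p_j + Σ_{j=1}^{N−i} p_{M−j+1}` as `ξ → −∞`.
(Indices are 0-based: 1-based `i` corresponds to the 0-based `i` here via
`i ↦ i−1`, so `1 ≤ i ≤ N` becomes `i < N`.) -/
theorem stmt_9 (M N : ℕ) (hM : 1 ≤ M) (hN : 1 ≤ N) (hNM : N ≤ M - 1)
    (p : Fin M → ℝ) (hp : ∀ j, 0 < p j) (hpmono : StrictMono p)
    (θ0 : Fin M → ℝ) (t : ℝ)
    (i : ℕ) (hi : i < N) :
    let θ : Fin M → ℤ → ℝ → ℝ := fun j n x =>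
      (n : ℝ) * Real.log (p j) + p j * x - t / p j + θ0 j
    let τ : ℤ → ℝ → ℝ := fun n x =>
      ∑ ι : Fin N → Fin M,
        if StrictMono ι then
          (∏ a : Fin N, ∏ b : Fin N, if a < b then (p (ι a) - p (ι b)) ^ 2 else 1) *
            Real.exp (∑ j, θ (ι j) n x)
        else 0
    let w : ℤ → ℝ → ℝ := fun n x => deriv (fun y => Real.log (τ n y)) x
    let c : ℝ := -(Real.log (p ⟨i, by omega⟩) - Real.log (p ⟨M - N + i, by omega⟩)) /
      (p ⟨i, by omega⟩ - p ⟨M - N + i, by omega⟩)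
    ∃ W : ℝ → ℝ,
      (∀ ξ : ℝ,
        Filter.Tendsto (fun n : ℤ => w n (c * (n : ℝ) + ξ)) Filter.atBot (nhds (W ξ))) ∧
      Filter.Tendsto W Filter.atTop
        (nhds (∑ j ∈ Finset.univ.filter
          (fun j : Fin M => (j : ℕ) < i ∨ M - N + i ≤ (j : ℕ)), p j)) ∧
      Filter.Tendsto W Filter.atBot
        (nhds (∑ j ∈ Finset.univ.filter
          (fun j : Fin M => (j : ℕ) < i + 1 ∨ M - N + i + 1 ≤ (j : ℕ)), p j)) := by
  intro θ τ w c
  have hlt : N < M := by omega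
  set i0 : Fin M := ⟨i, by omega⟩ with hi0
  set i1 : Fin M := ⟨M - N + i, by omega⟩ with hi1
  have hp01 : p i0 < p i1 := hpmono (by rw [Fin.lt_def]; simp only [hi0, hi1]; omega)
  have heq : Real.log (p i0) + c * p i0 = Real.log (p i1) + c * p i1 := by
    have hne : p i0 - p i1 ≠ 0 := (sub_neg.2 hp01).ne
    have hc : c * (p i0 - p i1) = -(Real.log (p i0) - Real.log (p i1)) :=
      div_mul_cancel₀ _ hne
    linarith
  have hq : ∀ x y z : Fin M, x < y → y < z →
      min (Real.log (p x) + c * p x) (Real.log (p z) + c * p z) <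
        Real.log (p y) + c * p y :=
    fun x y z hxy hyz => quasi c _ _ _ (hp x) (hpmono hxy) (hpmono hyz)
  have hsplit : ∀ f : Fin N → Fin M, ∑ j, Real.log (p (f j)) + c * ∑ j, p (f j) =
      ∑ j, (Real.log (p (f j)) + c * p (f j)) := fun f => by
    rw [Finset.sum_add_distrib, Finset.mul_sum]
  have main := abstract_limit
    (Finset.univ.filter fun f : Fin N → Fin M => StrictMono f)
    (sel M N hlt.le (i + 1)) (sel M N hlt.le i)
    (by simpa using sel_mono M N hlt.le (i + 1)) (by simpa using sel_mono M N hlt.le i)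
    (fun f => ∏ a : Fin N, ∏ b : Fin N, if a < b then (p (f a) - p (f b)) ^ 2 else 1)
    (fun f => ∑ j, Real.log (p (f j))) (fun f => ∑ j, p (f j))
    (fun f => ∑ j, (θ0 (f j) - t / p (f j)))
    (by
      intro f hf
      have hf' : StrictMono f := by simpa using hf
      refine Finset.prod_pos fun a _ => Finset.prod_pos fun b _ => ?_
      split_ifs with hab
      · have := hpmono (hf' hab)
        exact sq_pos_of_neg (sub_neg.2 this)
      · exact one_pos) c
    (by
      rw [hsplit, hsplit]
      have := sel_diff M N hlt i hi (fun k => Real.log (p k) + c * p k)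
      linarith)
    (by
      intro f hf hA hB
      have hf' : StrictMono f := by simpa using hf
      rw [hsplit, hsplit]
      exact sum_min M N hlt i hi (fun k => Real.log (p k) + c * p k) hq heq f hf' hA hB)
    (by
      have := sel_diff M N hlt i hi p
      linarith)
  obtain ⟨W, h1, h2, h3⟩ := main
  refine ⟨W, fun ξ => ?_, ?_, ?_⟩
  · refine (h1 ξ).congr fun n => ?_
    simp only [w]
    congr 1
    funext y
    congr 1
    simp only [τ]
    rw [Finset.sum_filter]
    refine Finset.sum_congr rfl fun f _ => ?_
    split_ifs with hf
    · congr 2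
      simp only [θ]
      rw [Finset.mul_sum, Finset.sum_mul, ← Finset.sum_add_distrib, ← Finset.sum_add_distrib]
      exact Finset.sum_congr rfl fun j _ => by ring
    · rfl
  · rw [sel_sum M N hlt.le i (by omega) p] at h2
    exact h2
  · rw [sel_sum M N hlt.le (i + 1) (by omega) p] at h3
    exact h3
end

section
/- Let 1 ≤ N ≤ M. Then the N×N Hankel determinant det( f(l, m, n+k+k') )_{0≤k,k'≤N−1} equals Σ_{1≤i_1<⋯<i_N≤M} Δ(i_1,…,i_N)·∏_{j=1}^N α_{i_j}·φ_{i_j}(l,m,n), where Δ(i_1,…,i_N) = ∏_{1≤j<l≤N} (p_{i_j} − p_{i_l})²; in particular, when all α_i > 0 this determinant is strictly positive. -/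
open scoped Classical


theorem hankel_expand (M N : ℕ) (p w : Fin M → ℝ) :
    Matrix.det (Matrix.of fun k k' : Fin N => ∑ i, w i * p i ^ (k : ℕ) * p i ^ (k' : ℕ)) =
      ∑ ι : Fin N → Fin M, (∏ k, w (ι k) * p (ι k) ^ (k : ℕ)) *
        (Matrix.vandermonde (fun k => p (ι k))).det := by
  have h1 : (Matrix.of fun k k' : Fin N => ∑ i, w i * p i ^ (k : ℕ) * p i ^ (k' : ℕ)) =
      fun k : Fin N => ∑ i, (fun k' : Fin N => w i * p i ^ (k : ℕ) * p i ^ (k' : ℕ)) := by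
    funext k k'
    simp [Finset.sum_apply]
  have h2 := (Matrix.detRowAlternating (R := ℝ) (n := Fin N)).toMultilinearMap.map_sum
    (fun (k : Fin N) (i : Fin M) =>
      (fun k' : Fin N => w i * p i ^ (k : ℕ) * p i ^ (k' : ℕ)))
  rw [h1]
  refine h2.trans (Finset.sum_congr rfl fun ι _ => ?_)
  exact Matrix.det_mul_column (fun k => w (ι k) * p (ι k) ^ (k : ℕ))
    (Matrix.vandermonde (fun k => p (ι k)))

theorem sum_injective_eq (M N : ℕ) (F : (Fin N → Fin M) → ℝ)
    (hF : ∀ ι, ¬ Function.Injective ι → F ι = 0) :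
    ∑ ι, F ι = ∑ s : Fin N → Fin M, if StrictMono s then
      ∑ σ : Equiv.Perm (Fin N), F (s ∘ σ) else 0 := by
  rw [← Finset.sum_filter, ← Finset.sum_product']
  have h0 : ∑ ι, F ι = ∑ ι ∈ Finset.univ.filter (fun ι : Fin N → Fin M => Function.Injective ι),
      F ι := by
    symm
    apply Finset.sum_subset (Finset.subset_univ _)
    intro x _ hx
    exact hF x (by simpa using hx)
  rw [h0]
  symm
  refine Finset.sum_bij (fun x _ => x.1 ∘ x.2) ?_ ?_ ?_ ?_
  · rintro ⟨s, σ⟩ h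
    simp only [Finset.mem_product, Finset.mem_filter, Finset.mem_univ, true_and, and_true] at h ⊢
    exact h.injective.comp σ.injective
  · rintro ⟨s, σ⟩ h ⟨s', σ'⟩ h' e
    simp only [Finset.mem_product, Finset.mem_filter, Finset.mem_univ, true_and, and_true] at h h' e
    have hr : Set.range s = Set.range s' := by
      rw [← σ.surjective.range_comp s, ← σ'.surjective.range_comp s', e]
    have hs : s = s' := (StrictMono.range_inj h h').1 hr
    subst hs
    have : σ = σ' := Equiv.ext fun k => h.injective (congrFun e k)
    rw [this]
  · intro ι hι
    simp only [Finset.mem_filter, Finset.mem_univ, true_and] at hι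
    refine ⟨(ι ∘ Tuple.sort ι, (Tuple.sort ι)⁻¹), ?_, ?_⟩
    · simp only [Finset.mem_product, Finset.mem_filter, Finset.mem_univ, true_and, and_true]
      exact (Tuple.monotone_sort ι).strictMono_of_injective
        (hι.comp (Tuple.sort ι).injective)
    · funext k
      simp
  · intro _ _
    rfl

theorem vandermonde_sq (M N : ℕ) (p : Fin M → ℝ) (s : Fin N → Fin M) :
    (Matrix.vandermonde (fun k => p (s k))).det ^ 2 =
      ∏ a : Fin N, ∏ b : Fin N, if a < b then (p (s a) - p (s b)) ^ 2 else 1 := by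
  rw [Matrix.det_vandermonde, ← Finset.prod_pow]
  refine Finset.prod_congr rfl fun a _ => ?_
  rw [← Finset.prod_pow, ← Finset.prod_filter]
  refine Finset.prod_congr ?_ fun b _ => by ring
  ext b
  simp

theorem hankel_formula (M N : ℕ) (p w : Fin M → ℝ) :
    Matrix.det (Matrix.of fun k k' : Fin N => ∑ i, w i * p i ^ (k : ℕ) * p i ^ (k' : ℕ)) =
      ∑ s : Fin N → Fin M, if StrictMono s then
        (∏ a : Fin N, ∏ b : Fin N, if a < b then (p (s a) - p (s b)) ^ 2 else 1) *
          ∏ j, w (s j) else 0 := by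
  rw [hankel_expand, sum_injective_eq]
  · refine Finset.sum_congr rfl fun s _ => ?_
    split_ifs with hs
    · rw [← vandermonde_sq, sq]
      have h1 : ∀ σ : Equiv.Perm (Fin N),
          (∏ k, w ((s ∘ σ) k) * p ((s ∘ σ) k) ^ (k : ℕ)) *
            (Matrix.vandermonde (fun k => p ((s ∘ σ) k))).det =
          (((Equiv.Perm.sign σ : ℤ) : ℝ) * ∏ k, Matrix.vandermonde (fun k => p (s k)) (σ k) k) *
            ((Matrix.vandermonde (fun k => p (s k))).det * ∏ j, w (s j)) := by
        intro σ
        have h2 : (Matrix.vandermonde (fun k => p ((s ∘ σ) k))).det =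
            ((Equiv.Perm.sign σ : ℤ) : ℝ) * (Matrix.vandermonde (fun k => p (s k))).det :=
          Matrix.det_permute σ (Matrix.vandermonde (fun k => p (s k)))
        have h3 : ∏ k, w ((s ∘ σ) k) = ∏ j, w (s j) :=
          Equiv.prod_comp σ (fun j => w (s j))
        rw [h2, Finset.prod_mul_distrib, h3]
        simp only [Matrix.vandermonde_apply, Function.comp]
        ring
      rw [Finset.sum_congr rfl fun σ _ => h1 σ, ← Finset.sum_mul, ← Matrix.det_apply']
      ring
    · rfl
  · intro ι hι
    have : (Matrix.vandermonde (fun k => p (ι k))).det = 0 := by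
      rw [Matrix.det_vandermonde_eq_zero_iff]
      simp only [Function.Injective, not_forall] at hι
      obtain ⟨a, b, h, hne⟩ := hι
      exact ⟨a, b, by rw [h], hne⟩
    rw [this, mul_zero]

/-- the discrete N×N Hankel determinant equals the sum over
strictly increasing index tuples of the squared van der Monde determinant
times `∏ α_{i_j}·φ_{i_j}(l,m,n)`; in particular when all `α_i > 0` the
determinant is strictly positive. -/
theorem stmt_10 (δ κ : ℝ) (hδ : 0 < δ) (hκ : 0 < κ)
    (M N : ℕ) (hM : 1 ≤ M) (hN : 1 ≤ N) (hNM : N ≤ M)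
    (p : Fin M → ℝ) (hp : ∀ i, 0 < p i) (hpmono : StrictMono p)
    (α : Fin M → ℝ)
    (φ : Fin M → ℤ → ℤ → ℝ → ℝ)
    (hφ : ∀ i l m n, φ i l m n =
      p i ^ n * (1 + δ * p i) ^ l * (1 + κ / p i) ^ (-m))
    (f : ℤ → ℤ → ℝ → ℝ)
    (hf : ∀ l m n, f l m n = ∑ i, α i * φ i l m n)
    (l m : ℤ) (n : ℝ) :
    Matrix.det (Matrix.of fun k k' : Fin N =>
        f l m (n + ((k : ℕ) : ℝ) + ((k' : ℕ) : ℝ))) =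
      (∑ ι : Fin N → Fin M,
        if StrictMono ι then
          (∏ a : Fin N, ∏ b : Fin N, if a < b then (p (ι a) - p (ι b)) ^ 2 else 1) *
            ∏ j, (α (ι j) * φ (ι j) l m n)
        else 0) ∧
    ((∀ i, 0 < α i) →
      0 < Matrix.det (Matrix.of fun k k' : Fin N =>
        f l m (n + ((k : ℕ) : ℝ) + ((k' : ℕ) : ℝ)))) := by
  have key : Matrix.det (Matrix.of fun k k' : Fin N =>
        f l m (n + ((k : ℕ) : ℝ) + ((k' : ℕ) : ℝ))) =
      (∑ ι : Fin N → Fin M,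
        if StrictMono ι then
          (∏ a : Fin N, ∏ b : Fin N, if a < b then (p (ι a) - p (ι b)) ^ 2 else 1) *
            ∏ j, (α (ι j) * φ (ι j) l m n)
        else 0) := by
    rw [← hankel_formula M N p (fun i => α i * φ i l m n)]
    congr 1
    ext k k'
    simp only [Matrix.of_apply, hf]
    refine Finset.sum_congr rfl fun i _ => ?_
    rw [hφ, hφ, Real.rpow_add (hp i), Real.rpow_add (hp i), Real.rpow_natCast, Real.rpow_natCast]
    ring
  refine ⟨key, fun hα => ?_⟩
  rw [key]
  have hpos : ∀ ι : Fin N → Fin M, StrictMono ι → 0 <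
      (∏ a : Fin N, ∏ b : Fin N, if a < b then (p (ι a) - p (ι b)) ^ 2 else 1) *
            ∏ j, (α (ι j) * φ (ι j) l m n) := by
    intro ι hι
    apply mul_pos
    · refine Finset.prod_pos fun a _ => Finset.prod_pos fun b _ => ?_
      split_ifs with hab
      · have := hpmono (hι hab)
        exact sq_pos_of_neg (by linarith)
      · exact one_pos
    · refine Finset.prod_pos fun j _ => mul_pos (hα _) ?_
      rw [hφ]
      have := hp (ι j)
      positivity
  apply Finset.sum_pos'
  · intro ι _
    split_ifs with h
    · exact (hpos ι h).le
    · exact le_rfl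
  · refine ⟨Fin.castLE hNM, Finset.mem_univ _, ?_⟩
    have h : StrictMono (Fin.castLE hNM) := Fin.strictMono_castLE hNM
    rw [if_pos h]
    exact hpos _ h
end

section
/- Let δ, κ > 0 and 0 < p_1 ≠ p_2. Define k_n = log p_1 − log p_2, k_m = −log(1+κ/p_1) + log(1+κ/p_2), and ω = −log(1+δ·p_1) + log(1+δ·p_2). Then these parameters satisfy the discrete dispersion relation (e^{−ω} − 1)(1 − e^{−k_m}) = δ·κ·( e^{−k_m + k_n} + e^{−ω − k_n} − e^{−ω − k_m} − 1 ). -/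
/-- the one-soliton parameters of the fully discrete 2D Toda
lattice satisfy the discrete dispersion relation. -/
theorem stmt_11 (δ κ p₁ p₂ : ℝ) (hδ : 0 < δ) (hκ : 0 < κ)
    (h₁ : 0 < p₁) (h₂ : 0 < p₂) (hne : p₁ ≠ p₂)
    (kn km ω : ℝ)
    (hkn : kn = Real.log p₁ - Real.log p₂)
    (hkm : km = -Real.log (1 + κ / p₁) + Real.log (1 + κ / p₂))
    (hω : ω = -Real.log (1 + δ * p₁) + Real.log (1 + δ * p₂)) :
    (Real.exp (-ω) - 1) * (1 - Real.exp (-km)) =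
      δ * κ * (Real.exp (-km + kn) + Real.exp (-ω - kn) - Real.exp (-ω - km) - 1) := by
  have a₁ : 0 < 1 + κ / p₁ := by positivity
  have a₂ : 0 < 1 + κ / p₂ := by positivity
  have b₁ : 0 < 1 + δ * p₁ := by positivity
  have b₂ : 0 < 1 + δ * p₂ := by positivity
  have c₂ : 0 < p₂ + κ := by positivity
  have hN : Real.exp kn = p₁ / p₂ := by
    rw [hkn, Real.exp_sub, Real.exp_log h₁, Real.exp_log h₂]
  have hM : Real.exp (-km) = p₂ * (p₁ + κ) / (p₁ * (p₂ + κ)) := by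
    have : -km = Real.log (1 + κ / p₁) - Real.log (1 + κ / p₂) := by rw [hkm]; ring
    rw [this, Real.exp_sub, Real.exp_log a₁, Real.exp_log a₂]
    rw [div_eq_div_iff a₂.ne' (by positivity)]
    field_simp
  have hW : Real.exp (-ω) = (1 + δ * p₁) / (1 + δ * p₂) := by
    have : -ω = Real.log (1 + δ * p₁) - Real.log (1 + δ * p₂) := by rw [hω]; ring
    rw [this, Real.exp_sub, Real.exp_log b₁, Real.exp_log b₂]
  rw [sub_eq_add_neg (-ω) km, Real.exp_add (-ω) (-km), Real.exp_add, Real.exp_sub, hN, hM, hW]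
  field_simp
  ring
end

section
/- Let κ > 0, 0 < p_1 < p_2 < ⋯ < p_M, and let 1 ≤ i < j ≤ M. Then at c = c_{i,j} one has η_i(c) = η_j(c); moreover η_l(c) > η_i(c) for every l with i < l < j, and η_l(c) < η_i(c) for every l with l < i or l > j. Consequently σ_{i,j} := #{ l ∈ {1,…,M} : η_l(c_{i,j}) < η_i(c_{i,j}) } equals (i−1) + (M−j); equivalently, σ_{i,j} = s if and only if j = M − s + i − 1. -/
open scoped Classical

lemma aux_convex (κ : ℝ) (hκ : 0 < κ) :
    StrictConvexOn ℝ Set.univ (fun x : ℝ => Real.log (1 + κ * Real.exp (-x))) := by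
  have hd : ∀ x : ℝ, HasDerivAt (fun x : ℝ => Real.log (1 + κ * Real.exp (-x)))
      (-(κ / (Real.exp x + κ))) x := by
    intro x
    have h1 : HasDerivAt (fun x : ℝ => 1 + κ * Real.exp (-x)) (κ * (Real.exp (-x) * (-1))) x :=
      (((hasDerivAt_neg x).exp).const_mul κ).const_add 1
    have hpos : 0 < 1 + κ * Real.exp (-x) := by positivity
    have h2 := h1.log hpos.ne'
    convert h2 using 1
    have := Real.exp_pos x
    rw [Real.exp_neg]
    field_simp
  apply StrictMono.strictConvexOn_univ_of_deriv
  · exact continuous_iff_continuousAt.2 fun x => (hd x).continuousAt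
  · intro x y hxy
    rw [(hd x).deriv, (hd y).deriv]
    have := Real.exp_lt_exp.2 hxy
    have := Real.exp_pos x
    apply neg_lt_neg
    apply div_lt_div_of_pos_left hκ <;> linarith

lemma aux_key (κ : ℝ) (hκ : 0 < κ) (a b d : ℝ) (ha : 0 < a) (hab : a < b) (hbd : b < d) :
    Real.log a < Real.log b ∧ Real.log b < Real.log d ∧
    (Real.log (1 + κ / b) - Real.log (1 + κ / a)) * (Real.log d - Real.log b) <
    (Real.log (1 + κ / d) - Real.log (1 + κ / b)) * (Real.log b - Real.log a) := by
  have hb := ha.trans hab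
  have hd := hb.trans hbd
  have h1 := Real.log_lt_log ha hab
  have h2 := Real.log_lt_log hb hbd
  refine ⟨h1, h2, ?_⟩
  have h := (aux_convex κ hκ).slope_strict_mono_adjacent (Set.mem_univ _) (Set.mem_univ _) h1 h2
  simp only [Real.exp_neg, Real.exp_log ha, Real.exp_log hb, Real.exp_log hd] at h
  rw [div_lt_div_iff₀ (by linarith) (by linarith)] at h
  simpa only [div_eq_mul_inv] using h

/-- discrete analogue of STATEMENT 6, for the lines
`η_i(c) = c·log p_i − log(1+κ/p_i)`: at `c = c_{i,j}` one has
`η_i(c) = η_j(c)`; the lines `η_l` with `i < l < j` are above, all the others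
are below, and the level of intersection `σ_{i,j}` equals `(i−1) + (M−j)`
(1-based); equivalently `σ_{i,j} = s` iff `j = M − s + i − 1`.  Indices here
are 0-based, so the level is `i + (M − 1 − j)` and the equivalence reads
`j + s + 1 = M + i`. -/
theorem stmt_12 (κ : ℝ) (hκ : 0 < κ)
    (M : ℕ) (p : Fin M → ℝ) (hp : ∀ j, 0 < p j) (hpmono : StrictMono p)
    (i j : Fin M) (hij : i < j)
    (η : Fin M → ℝ → ℝ) (hη : ∀ l c, η l c = c * Real.log (p l) - Real.log (1 + κ / p l))
    (c : ℝ)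
    (hc : c = (Real.log (1 + κ / p i) - Real.log (1 + κ / p j)) /
      (Real.log (p i) - Real.log (p j))) :
    η i c = η j c ∧
    (∀ l : Fin M, i < l → l < j → η i c < η l c) ∧
    (∀ l : Fin M, l < i ∨ j < l → η l c < η i c) ∧
    (Finset.univ.filter (fun l : Fin M => η l c < η i c)).card = (i : ℕ) + (M - 1 - (j : ℕ)) ∧
    (∀ s : ℕ, (Finset.univ.filter (fun l : Fin M => η l c < η i c)).card = s ↔
        (j : ℕ) + s + 1 = M + (i : ℕ)) := by
  have hX : Real.log (p i) < Real.log (p j) := Real.log_lt_log (hp i) (hpmono hij)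
  have hcm : c * (Real.log (p i) - Real.log (p j)) =
      Real.log (1 + κ / p i) - Real.log (1 + κ / p j) := by
    rw [hc, div_mul_cancel₀]
    linarith
  have h1 : η i c = η j c := by
    rw [hη, hη]; linarith
  have h2 : ∀ l : Fin M, i < l → l < j → η i c < η l c := by
    intro l hil hlj
    obtain ⟨ha, hb, h⟩ := aux_key κ hκ _ _ _ (hp i) (hpmono hil) (hpmono hlj)
    rw [hη, hη]
    by_contra! hn
    nlinarith
  have h3 : ∀ l : Fin M, l < i ∨ j < l → η l c < η i c := by
    rintro l (hl | hl)
    · obtain ⟨ha, hb, h⟩ := aux_key κ hκ _ _ _ (hp l) (hpmono hl) (hpmono hij)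
      rw [hη, hη]
      by_contra! hn
      nlinarith
    · obtain ⟨ha, hb, h⟩ := aux_key κ hκ _ _ _ (hp i) (hpmono hij) (hpmono hl)
      rw [hη, hη]
      rw [hη, hη] at h1
      by_contra! hn
      nlinarith
  have hs : (Finset.univ.filter (fun l : Fin M => η l c < η i c)) = (Finset.Icc i j)ᶜ := by
    ext l
    simp only [Finset.mem_filter, Finset.mem_univ, true_and, Finset.mem_compl, Finset.mem_Icc]
    constructor
    · rintro h ⟨ha, hb⟩
      rcases ha.eq_or_lt with rfl | ha
      · exact lt_irrefl _ h
      rcases hb.eq_or_lt with rfl | hb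
      · exact h.ne h1.symm
      exact lt_asymm h (h2 l ha hb)
    · intro h
      apply h3
      by_contra! hn
      exact h hn
  have hcard : (Finset.univ.filter (fun l : Fin M => η l c < η i c)).card
      = (i : ℕ) + (M - 1 - (j : ℕ)) := by
    rw [hs, Finset.card_compl, Fin.card_Icc, Fintype.card_fin]
    have := j.isLt
    have : (i : ℕ) < j := hij
    omega
  refine ⟨h1, h2, h3, hcard, fun s => ?_⟩
  rw [hcard]
  have := j.isLt
  have : (i : ℕ) < j := hij
  omega
end

section
/- Fix integers P, Q, A. Then lim_{ε→0⁺} ε·log( 1 + e^{A/ε}·φ_ε(P)/φ_ε(Q) ) = max(0, Θ), where Θ = A + n·(P − Q) + l·( max(0, P − r) − max(0, Q − r) ) + m·( max(0, −Q − s) − max(0, −P − s) ). -/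
open Filter Topology in
lemma aux_soft (g : ℝ → ℝ) (G : ℝ) (hg : Tendsto g (𝓝[>] 0) (𝓝 G)) :
    Tendsto (fun ε : ℝ => ε * Real.log (1 + Real.exp (g ε / ε))) (𝓝[>] 0) (𝓝 (max 0 G)) := by
  have h1 : Tendsto (fun ε => max 0 (g ε)) (𝓝[>] 0) (𝓝 (max 0 G)) := tendsto_const_nhds.max hg
  have h0 : Tendsto (fun ε : ℝ => ε) (𝓝[>] 0) (𝓝 0) := tendsto_id.mono_left nhdsWithin_le_nhds
  have h2 : Tendsto (fun ε => max 0 (g ε) + ε * Real.log 2) (𝓝[>] 0) (𝓝 (max 0 G)) := by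
    simpa using h1.add (h0.mul_const (Real.log 2))
  refine tendsto_of_tendsto_of_tendsto_of_le_of_le' h1 h2 ?_ ?_
  · filter_upwards [self_mem_nhdsWithin] with ε hε
    have hε : 0 < ε := hε
    have hp := Real.exp_pos (g ε / ε)
    apply max_le
    · exact mul_nonneg hε.le (Real.log_nonneg (by linarith))
    · have : g ε / ε ≤ Real.log (1 + Real.exp (g ε / ε)) := by
        rw [Real.le_log_iff_exp_le (by linarith)]; linarith
      rw [div_le_iff₀ hε] at this
      linarith
  · filter_upwards [self_mem_nhdsWithin] with ε hε
    have hε : 0 < ε := hε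
    have hp := Real.exp_pos (g ε / ε)
    have key : Real.log (1 + Real.exp (g ε / ε)) ≤ max 0 (g ε) / ε + Real.log 2 := by
      rw [Real.log_le_iff_le_exp (by linarith), Real.exp_add, Real.exp_log (by norm_num)]
      have a1 : 1 ≤ Real.exp (max 0 (g ε) / ε) :=
        Real.one_le_exp (div_nonneg (le_max_left _ _) hε.le)
      have a2 : Real.exp (g ε / ε) ≤ Real.exp (max 0 (g ε) / ε) :=
        Real.exp_le_exp.2 (div_le_div_of_nonneg_right (le_max_right _ _) hε.le)
      linarith
    calc _ ≤ ε * (max 0 (g ε) / ε + Real.log 2) := mul_le_mul_of_nonneg_left key hε.le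
      _ = _ := by field_simp


/-- ultra-discrete limit of the one-soliton τ-function:
`ε·log(1 + e^{A/ε}·φ_ε(P)/φ_ε(Q)) → max(0, Θ)` as `ε → 0⁺`, with
`Θ = A + n(P−Q) + l(max(0,P−r) − max(0,Q−r)) + m(max(0,−Q−s) − max(0,−P−s))`. -/
theorem stmt_16 (l m n : ℤ) (r s : ℕ) (P Q A : ℤ) :
    let φ : ℤ → ℝ → ℝ := fun Pp ε =>
      Real.exp ((n : ℝ) * (Pp : ℝ) / ε) *
        (1 + Real.exp (-(r : ℝ) / ε) * Real.exp ((Pp : ℝ) / ε)) ^ l *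
        (1 + Real.exp (-(s : ℝ) / ε) * Real.exp (-(Pp : ℝ) / ε)) ^ (-m)
    let Θ : ℝ := (A : ℝ) + (n : ℝ) * ((P : ℝ) - (Q : ℝ)) +
      (l : ℝ) * (max 0 ((P : ℝ) - (r : ℝ)) - max 0 ((Q : ℝ) - (r : ℝ))) +
      (m : ℝ) * (max 0 (-(Q : ℝ) - (s : ℝ)) - max 0 (-(P : ℝ) - (s : ℝ)))
    Filter.Tendsto
      (fun ε : ℝ => ε * Real.log (1 + Real.exp ((A : ℝ) / ε) * φ P ε / φ Q ε))
      (nhdsWithin 0 (Set.Ioi 0)) (nhds (max 0 Θ)) := by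

  intro φ Θ
  have hpos : ∀ p ε, 0 < φ p ε := fun p ε => by
    simp only [φ]; positivity
  have hlim : ∀ p : ℤ, Filter.Tendsto (fun ε => ε * Real.log (φ p ε)) (nhdsWithin 0 (Set.Ioi 0))
      (nhds ((n : ℝ) * p + l * max 0 ((p : ℝ) - r) - m * max 0 (-(p : ℝ) - s))) := by
    intro p
    have e1 := aux_soft (fun _ => (p : ℝ) - r) _ tendsto_const_nhds
    have e2 := aux_soft (fun _ => -(p : ℝ) - s) _ tendsto_const_nhds
    have e3 := ((tendsto_const_nhds (x := (n : ℝ) * p)).add (e1.const_mul (l : ℝ))).sub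
      (e2.const_mul (m : ℝ))
    refine e3.congr' ?_
    filter_upwards [self_mem_nhdsWithin] with ε hε
    have hε : ε ≠ 0 := ne_of_gt hε
    simp only [φ]
    rw [Real.log_mul (by positivity) (by positivity), Real.log_mul (by positivity) (by positivity),
      Real.log_exp, Real.log_zpow, Real.log_zpow, ← Real.exp_add, ← Real.exp_add]
    have b1 : -(r : ℝ) / ε + p / ε = (p - r) / ε := by ring
    have b2 : -(s : ℝ) / ε + -p / ε = (-p - s) / ε := by ring
    rw [b1, b2]
    push_cast
    field_simp
    ring
  have hg := ((tendsto_const_nhds (x := (A : ℝ))).add (hlim P)).sub (hlim Q)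
  have hmain := aux_soft _ _ hg
  have hΘ : Θ = (A : ℝ) + ((n : ℝ) * P + l * max 0 ((P : ℝ) - r) - m * max 0 (-(P : ℝ) - s)) -
      ((n : ℝ) * Q + l * max 0 ((Q : ℝ) - r) - m * max 0 (-(Q : ℝ) - s)) := by
    simp only [Θ]; ring
  rw [hΘ]
  refine hmain.congr' ?_
  filter_upwards [self_mem_nhdsWithin] with ε hε
  have hε : ε ≠ 0 := ne_of_gt hε
  have b : ((A : ℝ) + ε * Real.log (φ P ε) - ε * Real.log (φ Q ε)) / ε
      = A / ε + Real.log (φ P ε) - Real.log (φ Q ε) := by field_simp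
  rw [b, Real.exp_sub, Real.exp_add, Real.exp_log (hpos _ _), Real.exp_log (hpos _ _)]
end

section
/- Fix integers P_1, P_2, P_3 and A_1, A_2, A_3. Then lim_{ε→0⁺} ε·log( Σ_{i=1}^{3} e^{A_i/ε}·φ_ε(P_i) ) = max(R_1, R_2, R_3), where R_i = A_i + n·P_i + l·max(0, P_i − r) − m·max(0, −P_i − s). -/
lemma aux_add {f g : ℝ → ℝ} {a b : ℝ} (hf : ∀ x, 0 < f x) (hg : ∀ x, 0 < g x)
    (ha : Filter.Tendsto (fun ε : ℝ => ε * Real.log (f ε)) (nhdsWithin 0 (Set.Ioi 0)) (nhds a))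
    (hb : Filter.Tendsto (fun ε : ℝ => ε * Real.log (g ε)) (nhdsWithin 0 (Set.Ioi 0)) (nhds b)) :
    Filter.Tendsto (fun ε : ℝ => ε * Real.log (f ε + g ε)) (nhdsWithin 0 (Set.Ioi 0))
      (nhds (max a b)) := by
  have hm := ha.max hb
  have h2 : Filter.Tendsto (fun ε : ℝ => ε * Real.log 2) (nhdsWithin 0 (Set.Ioi 0)) (nhds 0) := by
    have : Filter.Tendsto (fun ε : ℝ => ε * Real.log 2) (nhds 0) (nhds (0 * Real.log 2)) :=
      (continuous_id.mul continuous_const).tendsto 0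
    rw [zero_mul] at this
    exact this.mono_left nhdsWithin_le_nhds
  have hu := h2.add hm
  rw [zero_add] at hu
  refine tendsto_of_tendsto_of_tendsto_of_le_of_le' hm hu ?_ ?_
  · filter_upwards [self_mem_nhdsWithin] with ε hε
    have hε : 0 < ε := hε
    have h1 := hf ε
    have h2 := hg ε
    refine max_le ?_ ?_
    · exact mul_le_mul_of_nonneg_left (Real.log_le_log h1 (by linarith)) hε.le
    · exact mul_le_mul_of_nonneg_left (Real.log_le_log h2 (by linarith)) hε.le
  · filter_upwards [self_mem_nhdsWithin] with ε hε
    have hε : 0 < ε := hε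
    have h1 := hf ε
    have h2 := hg ε
    rcases le_total (f ε) (g ε) with h | h
    · have : Real.log (f ε + g ε) ≤ Real.log 2 + Real.log (g ε) := by
        rw [← Real.log_mul two_ne_zero h2.ne']
        exact Real.log_le_log (by linarith) (by linarith)
      have := mul_le_mul_of_nonneg_left this hε.le
      have := le_max_right (ε * Real.log (f ε)) (ε * Real.log (g ε))
      linarith
    · have : Real.log (f ε + g ε) ≤ Real.log 2 + Real.log (f ε) := by
        rw [← Real.log_mul two_ne_zero h1.ne']
        exact Real.log_le_log (by linarith) (by linarith)
      have := mul_le_mul_of_nonneg_left this hε.le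
      have := le_max_left (ε * Real.log (f ε)) (ε * Real.log (g ε))
      linarith

lemma aux_exp (c : ℝ) :
    Filter.Tendsto (fun ε : ℝ => ε * Real.log (Real.exp (c / ε))) (nhdsWithin 0 (Set.Ioi 0))
      (nhds c) := by
  refine tendsto_const_nhds.congr' ?_
  filter_upwards [self_mem_nhdsWithin] with ε hε
  have hε : 0 < ε := hε
  rw [Real.log_exp]
  field_simp

lemma aux_one (c d : ℝ) :
    Filter.Tendsto (fun ε : ℝ => ε * Real.log (1 + Real.exp (c / ε) * Real.exp (d / ε)))
      (nhdsWithin 0 (Set.Ioi 0)) (nhds (max 0 (d + c))) := by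
  have h := aux_add (f := fun ε => Real.exp (0 / ε)) (g := fun ε => Real.exp ((d + c) / ε))
    (fun _ => Real.exp_pos _) (fun _ => Real.exp_pos _) (aux_exp 0) (aux_exp (d + c))
  refine h.congr fun ε => ?_
  rw [← Real.exp_add, zero_div, Real.exp_zero, add_div, add_comm (d / ε)]

lemma aux_mul {f g : ℝ → ℝ} {a b : ℝ} (hf : ∀ x, 0 < f x) (hg : ∀ x, 0 < g x)
    (ha : Filter.Tendsto (fun ε : ℝ => ε * Real.log (f ε)) (nhdsWithin 0 (Set.Ioi 0)) (nhds a))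
    (hb : Filter.Tendsto (fun ε : ℝ => ε * Real.log (g ε)) (nhdsWithin 0 (Set.Ioi 0)) (nhds b)) :
    Filter.Tendsto (fun ε : ℝ => ε * Real.log (f ε * g ε)) (nhdsWithin 0 (Set.Ioi 0))
      (nhds (a + b)) := by
  refine (ha.add hb).congr fun ε => ?_
  rw [Real.log_mul (hf ε).ne' (hg ε).ne', mul_add]

lemma aux_zpow {f : ℝ → ℝ} {a : ℝ} (k : ℤ)
    (ha : Filter.Tendsto (fun ε : ℝ => ε * Real.log (f ε)) (nhdsWithin 0 (Set.Ioi 0)) (nhds a)) :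
    Filter.Tendsto (fun ε : ℝ => ε * Real.log (f ε ^ k)) (nhdsWithin 0 (Set.Ioi 0))
      (nhds (k * a)) := by
  refine (ha.const_mul (k : ℝ)).congr fun ε => ?_
  rw [Real.log_zpow]
  ring

/-- ultra-discrete limit of the Y-junction τ-function:
`ε·log(Σ_{i=1}^{3} e^{A_i/ε}·φ_ε(P_i)) → max(R₁, R₂, R₃)` as `ε → 0⁺`, with
`R_i = A_i + n·P_i + l·max(0, P_i − r) − m·max(0, −P_i − s)`. -/
theorem stmt_17 (l m n : ℤ) (r s : ℕ) (P₁ P₂ P₃ A₁ A₂ A₃ : ℤ) :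
    let φ : ℤ → ℝ → ℝ := fun Pp ε =>
      Real.exp ((n : ℝ) * (Pp : ℝ) / ε) *
        (1 + Real.exp (-(r : ℝ) / ε) * Real.exp ((Pp : ℝ) / ε)) ^ l *
        (1 + Real.exp (-(s : ℝ) / ε) * Real.exp (-(Pp : ℝ) / ε)) ^ (-m)
    let R : ℤ → ℤ → ℝ := fun Pp Aa =>
      (Aa : ℝ) + (n : ℝ) * (Pp : ℝ) + (l : ℝ) * max 0 ((Pp : ℝ) - (r : ℝ)) -
        (m : ℝ) * max 0 (-(Pp : ℝ) - (s : ℝ))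
    Filter.Tendsto
      (fun ε : ℝ => ε * Real.log (Real.exp ((A₁ : ℝ) / ε) * φ P₁ ε +
        Real.exp ((A₂ : ℝ) / ε) * φ P₂ ε + Real.exp ((A₃ : ℝ) / ε) * φ P₃ ε))
      (nhdsWithin 0 (Set.Ioi 0)) (nhds (max (R P₁ A₁) (max (R P₂ A₂) (R P₃ A₃)))) := by
  intro φ R
  have hφ : ∀ p ε, 0 < φ p ε := fun p ε => by
    simp only [φ]
    positivity
  have hpos : ∀ p (a : ℤ) ε, 0 < Real.exp ((a : ℝ) / ε) * φ p ε := fun p a ε =>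
    mul_pos (Real.exp_pos _) (hφ p ε)
  have key : ∀ p a : ℤ, Filter.Tendsto
      (fun ε : ℝ => ε * Real.log (Real.exp ((a : ℝ) / ε) * φ p ε))
      (nhdsWithin 0 (Set.Ioi 0)) (nhds (R p a)) := by
    intro p a
    have h1 := aux_zpow l (aux_one (-(r : ℝ)) p)
    have h2 := aux_zpow (-m) (aux_one (-(s : ℝ)) (-(p : ℝ)))
    have h3 := aux_mul (fun ε => Real.exp_pos _) (fun ε => by positivity)
      (aux_exp ((n : ℝ) * p)) h1
    have h4 := aux_mul (fun ε => by positivity) (fun ε => by positivity) h3 h2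
    have h5 := aux_mul (fun ε => Real.exp_pos _) (hφ p) (aux_exp (a : ℝ)) h4
    convert h5 using 2
    simp only [R]
    push_cast
    simp only [sub_eq_add_neg]
    ring
  have h := aux_add (fun ε => add_pos (hpos P₁ A₁ ε) (hpos P₂ A₂ ε)) (hpos P₃ A₃)
    (aux_add (hpos P₁ A₁) (hpos P₂ A₂) (key P₁ A₁) (key P₂ A₂)) (key P₃ A₃)
  rw [max_assoc] at h
  exact h
end

section
/- Fix integers P_1 < P_2 < Q_2 < Q_1 and integers A_1, A_2. For ε > 0 set p_i = e^{P_i/ε}, q_i = e^{Q_i/ε}, η_i^ε = e^{A_i/ε}·φ_ε(P_i)/φ_ε(Q_i) (i = 1,2), θ_{12}^ε = (p_2 − p_1)(q_1 − q_2) / ( (q_1 − p_2)(q_2 − p_1) ), and τ_ε = 1 + η_1^ε + η_2^ε + θ_{12}^ε·η_1^ε·η_2^ε. Then lim_{ε→0⁺} ε·log τ_ε = max( 0, Θ_1, Θ_2, Θ_1 + Θ_2 + P_2 − Q_2 ), where Θ_i = A_i + n·(P_i − Q_i) + l·( max(0, P_i − r) − max(0, Q_i − r) ) + m·( max(0, −Q_i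 − s) − max(0, −P_i − s) ). -/
open Filter Topology in
/-- `f` is eventually positive and has ultradiscrete limit `a`. -/
def UDLim (f : ℝ → ℝ) (a : ℝ) : Prop :=
  (∀ᶠ ε in 𝓝[>] (0 : ℝ), 0 < f ε) ∧ Tendsto (fun ε => ε * Real.log (f ε)) (𝓝[>] (0 : ℝ)) (𝓝 a)

open Filter Topology

theorem UDLim.exp (a : ℝ) : UDLim (fun ε => Real.exp (a / ε)) a := by
  refine ⟨Eventually.of_forall fun _ => Real.exp_pos _, ?_⟩
  refine tendsto_const_nhds.congr' ?_
  filter_upwards [self_mem_nhdsWithin] with ε hε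
  have : ε ≠ 0 := ne_of_gt hε
  rw [Real.log_exp]
  field_simp

theorem UDLim.one : UDLim (fun _ => 1) 0 := by
  have := UDLim.exp 0
  simpa using this

theorem UDLim.mul {f g : ℝ → ℝ} {a b : ℝ} (hf : UDLim f a) (hg : UDLim g b) :
    UDLim (fun ε => f ε * g ε) (a + b) := by
  refine ⟨?_, (hf.2.add hg.2).congr' ?_⟩
  · filter_upwards [hf.1, hg.1] with ε h1 h2 using mul_pos h1 h2
  · filter_upwards [hf.1, hg.1] with ε h1 h2
    rw [Real.log_mul h1.ne' h2.ne']
    ring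

theorem UDLim.div {f g : ℝ → ℝ} {a b : ℝ} (hf : UDLim f a) (hg : UDLim g b) :
    UDLim (fun ε => f ε / g ε) (a - b) := by
  refine ⟨?_, (hf.2.sub hg.2).congr' ?_⟩
  · filter_upwards [hf.1, hg.1] with ε h1 h2 using div_pos h1 h2
  · filter_upwards [hf.1, hg.1] with ε h1 h2
    rw [Real.log_div h1.ne' h2.ne']
    ring

theorem UDLim.zpow {f : ℝ → ℝ} {a : ℝ} (hf : UDLim f a) (k : ℤ) :
    UDLim (fun ε => f ε ^ k) (k * a) := by
  refine ⟨?_, (hf.2.const_mul (k : ℝ)).congr' ?_⟩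
  · filter_upwards [hf.1] with ε h1 using zpow_pos h1 k
  · filter_upwards [hf.1] with ε h1
    rw [Real.log_zpow]
    ring

theorem UDLim.add {f g : ℝ → ℝ} {a b : ℝ} (hf : UDLim f a) (hg : UDLim g b) :
    UDLim (fun ε => f ε + g ε) (max a b) := by
  have hid : Tendsto (fun ε : ℝ => ε * Real.log 2) (𝓝[>] (0 : ℝ)) (𝓝 0) := by
    have h : Tendsto (fun ε : ℝ => ε * Real.log 2) (𝓝 0) (𝓝 (0 * Real.log 2)) :=
      tendsto_id.mul_const _
    rw [zero_mul] at h
    exact h.mono_left nhdsWithin_le_nhds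
  refine ⟨?_, ?_⟩
  · filter_upwards [hf.1, hg.1] with ε h1 h2 using add_pos h1 h2
  · have hm := hf.2.max hg.2
    have hu := hid.add hm
    rw [zero_add] at hu
    refine tendsto_of_tendsto_of_tendsto_of_le_of_le' hm hu ?_ ?_
    · filter_upwards [hf.1, hg.1, self_mem_nhdsWithin] with ε h1 h2 hε
      have hε' : (0 : ℝ) ≤ ε := le_of_lt hε
      refine max_le ?_ ?_
      · exact mul_le_mul_of_nonneg_left (Real.log_le_log h1 (by linarith)) hε'
      · exact mul_le_mul_of_nonneg_left (Real.log_le_log h2 (by linarith)) hε'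
    · filter_upwards [hf.1, hg.1, self_mem_nhdsWithin] with ε h1 h2 hε
      have hε' : (0 : ℝ) ≤ ε := le_of_lt hε
      have key : ∀ x y : ℝ, 0 < x → 0 < y → x ≤ y →
          ε * Real.log (x + y) ≤ ε * Real.log 2 + ε * Real.log y := by
        intro x y hx hy hxy
        rw [← mul_add, ← Real.log_mul two_ne_zero hy.ne']
        exact mul_le_mul_of_nonneg_left (Real.log_le_log (by linarith) (by linarith)) hε'
      rcases le_total (f ε) (g ε) with h | h
      · exact (key _ _ h1 h2 h).trans (by gcongr; exact le_max_right _ _)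
      · have := key _ _ h2 h1 h
        rw [add_comm (g ε)] at this
        exact this.trans (by gcongr; exact le_max_left _ _)

theorem UDLim.sub_exp {a b : ℝ} (hab : b < a) :
    UDLim (fun ε => Real.exp (a / ε) - Real.exp (b / ε)) a := by
  have h0 : Tendsto (fun ε : ℝ => Real.exp ((b - a) / ε)) (𝓝[>] (0 : ℝ)) (𝓝 0) := by
    have h : Tendsto (fun ε : ℝ => (b - a) * ε⁻¹) (𝓝[>] (0 : ℝ)) atBot :=
      tendsto_inv_nhdsGT_zero.const_mul_atTop_of_neg (by linarith)
    simpa only [div_eq_mul_inv, Function.comp_def] using Real.tendsto_exp_atBot.comp h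
  have h1 : Tendsto (fun ε : ℝ => 1 - Real.exp ((b - a) / ε)) (𝓝[>] (0 : ℝ)) (𝓝 1) := by
    simpa using h0.const_sub 1
  have h2 : UDLim (fun ε : ℝ => 1 - Real.exp ((b - a) / ε)) 0 := by
    refine ⟨h1.eventually (lt_mem_nhds one_pos), ?_⟩
    have h3 := h1.log one_ne_zero
    have h4 : Tendsto (fun ε : ℝ => ε) (𝓝[>] (0 : ℝ)) (𝓝 0) :=
      tendsto_id.mono_left nhdsWithin_le_nhds
    simpa using h4.mul h3
  have h5 := (UDLim.exp a).mul h2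
  rw [add_zero] at h5
  convert h5 using 2 with ε
  rw [mul_sub, mul_one, ← Real.exp_add]
  congr 2
  ring

/-- ultra-discrete limit of the two-soliton τ-function:
`ε·log τ_ε → max(0, Θ₁, Θ₂, Θ₁ + Θ₂ + P₂ − Q₂)` as `ε → 0⁺`. -/
theorem stmt_18 (l m n : ℤ) (r s : ℕ) (P₁ P₂ Q₂ Q₁ : ℤ) (A₁ A₂ : ℤ)
    (h₁₂ : P₁ < P₂) (h₂₂ : P₂ < Q₂) (h₂₁ : Q₂ < Q₁) :
    let φ : ℤ → ℝ → ℝ := fun Pp ε =>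
      Real.exp ((n : ℝ) * (Pp : ℝ) / ε) *
        (1 + Real.exp (-(r : ℝ) / ε) * Real.exp ((Pp : ℝ) / ε)) ^ l *
        (1 + Real.exp (-(s : ℝ) / ε) * Real.exp (-(Pp : ℝ) / ε)) ^ (-m)
    let η : ℤ → ℤ → ℤ → ℝ → ℝ := fun Pp Qq Aa ε =>
      Real.exp ((Aa : ℝ) / ε) * φ Pp ε / φ Qq ε
    let θ₁₂ : ℝ → ℝ := fun ε =>
      (Real.exp ((P₂ : ℝ) / ε) - Real.exp ((P₁ : ℝ) / ε)) *
        (Real.exp ((Q₁ : ℝ) / ε) - Real.exp ((Q₂ : ℝ) / ε)) /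
        ((Real.exp ((Q₁ : ℝ) / ε) - Real.exp ((P₂ : ℝ) / ε)) *
          (Real.exp ((Q₂ : ℝ) / ε) - Real.exp ((P₁ : ℝ) / ε)))
    let τ : ℝ → ℝ := fun ε =>
      1 + η P₁ Q₁ A₁ ε + η P₂ Q₂ A₂ ε + θ₁₂ ε * η P₁ Q₁ A₁ ε * η P₂ Q₂ A₂ ε
    let Θ : ℤ → ℤ → ℤ → ℝ := fun Pp Qq Aa =>
      (Aa : ℝ) + (n : ℝ) * ((Pp : ℝ) - (Qq : ℝ)) +
        (l : ℝ) * (max 0 ((Pp : ℝ) - (r : ℝ)) - max 0 ((Qq : ℝ) - (r : ℝ))) +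
        (m : ℝ) * (max 0 (-(Qq : ℝ) - (s : ℝ)) - max 0 (-(Pp : ℝ) - (s : ℝ)))
    Filter.Tendsto (fun ε : ℝ => ε * Real.log (τ ε))
      (nhdsWithin 0 (Set.Ioi 0))
      (nhds (max 0 (max (Θ P₁ Q₁ A₁) (max (Θ P₂ Q₂ A₂)
        (Θ P₁ Q₁ A₁ + Θ P₂ Q₂ A₂ + (P₂ : ℝ) - (Q₂ : ℝ)))))) := by
  intro φ η θ₁₂ τ Θ
  have hφ : ∀ p : ℤ, UDLim (φ p) ((n : ℝ) * p + l * max 0 ((p : ℝ) - r)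
      - m * max 0 (-(p : ℝ) - s)) := by
    intro p
    have h := ((UDLim.exp ((n : ℝ) * p)).mul
      ((UDLim.one.add ((UDLim.exp (-(r : ℝ))).mul (UDLim.exp (p : ℝ)))).zpow l)).mul
      ((UDLim.one.add ((UDLim.exp (-(s : ℝ))).mul (UDLim.exp (-(p : ℝ))))).zpow (-m))
    convert h using 1
    rw [show -(r : ℝ) + p = p - r by ring, show -(s : ℝ) + -(p : ℝ) = -p - s by ring]
    push_cast
    ring
  have hη : ∀ p q a : ℤ, UDLim (η p q a) (Θ p q a) := by
    intro p q a
    have h := ((UDLim.exp (a : ℝ)).mul (hφ p)).div (hφ q)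
    convert h using 1
    simp only [Θ]
    ring
  have c1 : (P₁ : ℝ) < P₂ := by exact_mod_cast h₁₂
  have c2 : (P₂ : ℝ) < Q₂ := by exact_mod_cast h₂₂
  have c3 : (Q₂ : ℝ) < Q₁ := by exact_mod_cast h₂₁
  have hθ : UDLim θ₁₂ ((P₂ : ℝ) + Q₁ - (Q₁ + Q₂)) :=
    ((UDLim.sub_exp c1).mul (UDLim.sub_exp c3)).div
      ((UDLim.sub_exp (c2.trans c3)).mul (UDLim.sub_exp (c1.trans c2)))
  have hτ := ((UDLim.one.add (hη P₁ Q₁ A₁)).add (hη P₂ Q₂ A₂)).add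
    ((hθ.mul (hη P₁ Q₁ A₁)).mul (hη P₂ Q₂ A₂))
  convert hτ.2 using 2
  rw [max_assoc, max_assoc]
  congr 3
  ring
end

section
/- Fix integers P_1 < P_2 < ⋯ < P_M, integers A_1,…,A_M, and 1 ≤ N ≤ M. For ε > 0 set p_i = e^{P_i/ε} and τ_ε = Σ_{1≤i_1<⋯<i_N≤M} ( ∏_{1≤j<l≤N} (p_{i_j} − p_{i_l})² )·∏_{j=1}^N e^{A_{i_j}/ε}·φ_ε(P_{i_j}). Then lim_{ε→0⁺} ε·log τ_ε = max over all 1 ≤ i_1 < ⋯ < i_N ≤ M of [ Σ_{j=1}^N R_{i_j} + 2·Σ_{j=2}^N (j−1)·P_{i_j} ], where R_i = A_i + n·P_i + l·max(0, P_i − r) − m·max(0, −P_i − s). -/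
open scoped Classical

/-- `f` is eventually positive and `ε log f → a` as `ε → 0⁺`. -/
def Trop (f : ℝ → ℝ) (a : ℝ) : Prop :=
  (∀ᶠ ε in nhdsWithin (0 : ℝ) (Set.Ioi 0), 0 < f ε) ∧
  Filter.Tendsto (fun ε : ℝ => ε * Real.log (f ε)) (nhdsWithin 0 (Set.Ioi 0)) (nhds a)

theorem ultra_congr {f g : ℝ → ℝ} {a b : ℝ} (h : Trop f a)
    (hfg : ∀ᶠ ε in nhdsWithin (0 : ℝ) (Set.Ioi 0), f ε = g ε) (hab : a = b) : Trop g b := by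
  subst hab
  refine ⟨?_, h.2.congr' ?_⟩
  · filter_upwards [h.1, hfg] with ε h1 h2
    rwa [← h2]
  · filter_upwards [hfg] with ε h2
    rw [h2]

theorem ultra_exp (a : ℝ) : Trop (fun ε => Real.exp (a / ε)) a := by
  refine ⟨Filter.Eventually.of_forall fun ε => Real.exp_pos _, ?_⟩
  refine tendsto_const_nhds.congr' ?_
  filter_upwards [self_mem_nhdsWithin] with ε hε
  have : (0 : ℝ) < ε := hε
  rw [Real.log_exp]
  field_simp

theorem ultra_one : Trop (fun _ => 1) 0 := by
  refine ⟨Filter.Eventually.of_forall fun ε => one_pos, ?_⟩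
  simp

theorem ultra_mul {f g : ℝ → ℝ} {a b : ℝ} (hf : Trop f a) (hg : Trop g b) :
    Trop (fun ε => f ε * g ε) (a + b) := by
  refine ⟨?_, (hf.2.add hg.2).congr' ?_⟩
  · filter_upwards [hf.1, hg.1] with ε h1 h2 using mul_pos h1 h2
  · filter_upwards [hf.1, hg.1] with ε h1 h2
    rw [Real.log_mul h1.ne' h2.ne']
    ring

theorem ultra_zpow {f : ℝ → ℝ} {a : ℝ} (hf : Trop f a) (k : ℤ) :
    Trop (fun ε => f ε ^ k) ((k : ℝ) * a) := by
  refine ⟨?_, (hf.2.const_mul (k : ℝ)).congr' ?_⟩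
  · filter_upwards [hf.1] with ε h1 using zpow_pos h1 k
  · filter_upwards with ε
    rw [Real.log_zpow]
    ring

theorem ultra_prod {α : Type*} (S : Finset α) (f : α → ℝ → ℝ) (a : α → ℝ)
    (h : ∀ i ∈ S, Trop (f i) (a i)) :
    Trop (fun ε => ∏ i ∈ S, f i ε) (∑ i ∈ S, a i) := by
  induction S using Finset.cons_induction with
  | empty => simpa using ultra_one
  | cons i S hi ih =>
    simp only [Finset.prod_cons, Finset.sum_cons]
    exact ultra_mul (h i (Finset.mem_cons_self i S))
      (ih fun j hj => h j (Finset.mem_cons_of_mem hj))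

theorem tendsto_id_zero :
    Filter.Tendsto (fun ε : ℝ => ε) (nhdsWithin 0 (Set.Ioi 0)) (nhds 0) :=
  Filter.tendsto_id.mono_left nhdsWithin_le_nhds

theorem ultra_add {f g : ℝ → ℝ} {a b : ℝ} (hf : Trop f a) (hg : Trop g b) :
    Trop (fun ε => f ε + g ε) (max a b) := by
  refine ⟨?_, ?_⟩
  · filter_upwards [hf.1, hg.1] with ε h1 h2 using add_pos h1 h2
  · have hmax := hf.2.max hg.2
    have hup := (tendsto_id_zero.mul_const (Real.log 2)).add hmax
    rw [zero_mul, zero_add] at hup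
    refine tendsto_of_tendsto_of_tendsto_of_le_of_le' hmax hup ?_ ?_
    · filter_upwards [hf.1, hg.1, self_mem_nhdsWithin] with ε h1 h2 hε
      have hε : (0 : ℝ) < ε := hε
      refine max_le ?_ ?_
      · exact mul_le_mul_of_nonneg_left (Real.log_le_log h1 (by linarith)) hε.le
      · exact mul_le_mul_of_nonneg_left (Real.log_le_log h2 (by linarith)) hε.le
    · filter_upwards [hf.1, hg.1, self_mem_nhdsWithin] with ε h1 h2 hε
      have hε : (0 : ℝ) < ε := hε
      rcases le_total (f ε) (g ε) with h | h
      · have : Real.log (f ε + g ε) ≤ Real.log 2 + Real.log (g ε) := by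
          rw [← Real.log_mul two_ne_zero h2.ne']
          exact Real.log_le_log (by linarith) (by linarith)
        have h3 := mul_le_mul_of_nonneg_left this hε.le
        have h4 := le_max_right (ε * Real.log (f ε)) (ε * Real.log (g ε))
        linarith
      · have : Real.log (f ε + g ε) ≤ Real.log 2 + Real.log (f ε) := by
          rw [← Real.log_mul two_ne_zero h1.ne']
          exact Real.log_le_log (by linarith) (by linarith)
        have h3 := mul_le_mul_of_nonneg_left this hε.le
        have h4 := le_max_left (ε * Real.log (f ε)) (ε * Real.log (g ε))
        linarith

theorem ultra_sum {α : Type*} (S : Finset α) (hS : S.Nonempty) (f : α → ℝ → ℝ) (a : α → ℝ)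
    (h : ∀ i ∈ S, Trop (f i) (a i)) :
    Trop (fun ε => ∑ i ∈ S, f i ε) (S.sup' hS a) := by
  induction hS using Finset.Nonempty.cons_induction with
  | singleton i => simpa using h i (by simp)
  | cons i S hi hS ih =>
    simp only [Finset.sum_cons]
    rw [Finset.sup'_cons hS]
    exact ultra_add (h i (Finset.mem_cons_self i S))
      (ih fun j hj => h j (Finset.mem_cons_of_mem hj))

theorem ultra_sub_sq {x y : ℝ} (hxy : x < y) :
    Trop (fun ε => (Real.exp (x / ε) - Real.exp (y / ε)) ^ 2) (2 * y) := by
  have h0 : Filter.Tendsto (fun ε : ℝ => Real.exp ((x - y) / ε))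
      (nhdsWithin 0 (Set.Ioi 0)) (nhds 0) := by
    have h : Filter.Tendsto (fun ε : ℝ => (x - y) / ε)
        (nhdsWithin 0 (Set.Ioi 0)) Filter.atBot := by
      simp only [div_eq_mul_inv]
      exact tendsto_inv_nhdsGT_zero.const_mul_atTop_of_neg (by linarith)
    exact Real.tendsto_exp_atBot.comp h
  have h1 : Filter.Tendsto (fun ε : ℝ => 1 - Real.exp ((x - y) / ε))
      (nhdsWithin 0 (Set.Ioi 0)) (nhds 1) := by
    simpa using tendsto_const_nhds.sub h0
  have h2 : Trop (fun ε : ℝ => 1 - Real.exp ((x - y) / ε)) 0 := by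
    refine ⟨h1.eventually (lt_mem_nhds one_pos), ?_⟩
    have := tendsto_id_zero.mul (h1.log one_ne_zero)
    simpa using this
  refine ultra_congr (ultra_zpow (ultra_mul (ultra_exp y) h2) 2) ?_ (by push_cast; ring)
  filter_upwards with ε
  have : Real.exp (x / ε) = Real.exp (y / ε) * Real.exp ((x - y) / ε) := by
    rw [← Real.exp_add]
    congr 1
    ring
  rw [this]
  norm_cast
  ring

theorem vander_exponent (N : ℕ) (c : Fin N → ℝ) :
    ∑ a : Fin N, ∑ b : Fin N, (if a < b then 2 * c b else 0)
      = 2 * ∑ j : Fin N, ((j : ℕ) : ℝ) * c j := by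
  rw [Finset.sum_comm, Finset.mul_sum]
  refine Finset.sum_congr rfl fun b _ => ?_
  rw [← Finset.sum_filter, Finset.sum_const, nsmul_eq_mul]
  have : (Finset.univ.filter fun a : Fin N => a < b).card = (b : ℕ) := by
    rw [← Fin.card_Iio b]
    congr 1
    ext a
    simp
  rw [this]
  ring

/-- ultra-discrete limit of the general resonant τ-function:
`ε·log τ_ε` tends, as `ε → 0⁺`, to the maximum over all strictly increasing
index tuples `i₁ < ⋯ < i_N` of `Σ_j R_{i_j} + 2·Σ_{j=2}^{N}(j−1)·P_{i_j}`,
where `R_i = A_i + n·P_i + l·max(0, P_i − r) − m·max(0, −P_i − s)`.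
(Tuples are encoded as strictly monotone maps `Fin N → Fin M`; the 0-based
position `j` carries the weight `j`, matching the 1-based weight `j−1`.) -/
theorem stmt_19 (lZ m n : ℤ) (r s : ℕ) (M N : ℕ) (hN : 1 ≤ N) (hNM : N ≤ M)
    (P : Fin M → ℤ) (hP : StrictMono P) (A : Fin M → ℤ) :
    let φ : ℤ → ℝ → ℝ := fun Pp ε =>
      Real.exp ((n : ℝ) * (Pp : ℝ) / ε) *
        (1 + Real.exp (-(r : ℝ) / ε) * Real.exp ((Pp : ℝ) / ε)) ^ lZ *
        (1 + Real.exp (-(s : ℝ) / ε) * Real.exp (-(Pp : ℝ) / ε)) ^ (-m)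
    let R : Fin M → ℝ := fun i =>
      (A i : ℝ) + (n : ℝ) * (P i : ℝ) + (lZ : ℝ) * max 0 ((P i : ℝ) - (r : ℝ)) -
        (m : ℝ) * max 0 (-(P i : ℝ) - (s : ℝ))
    let τ : ℝ → ℝ := fun ε =>
      ∑ ι : Fin N → Fin M,
        if StrictMono ι then
          (∏ a : Fin N, ∏ b : Fin N,
            if a < b then (Real.exp ((P (ι a) : ℝ) / ε) - Real.exp ((P (ι b) : ℝ) / ε)) ^ 2
            else 1) *
            ∏ j, (Real.exp ((A (ι j) : ℝ) / ε) * φ (P (ι j)) ε)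
        else 0
    Filter.Tendsto (fun ε : ℝ => ε * Real.log (τ ε))
      (nhdsWithin 0 (Set.Ioi 0))
      (nhds (⨆ ι : {g : Fin N → Fin M // StrictMono g},
        ((∑ j, R (ι.1 j)) + 2 * ∑ j : Fin N, ((j : ℕ) : ℝ) * (P (ι.1 j) : ℝ)))) := by
  intro φ R τ
  have : Nonempty {g : Fin N → Fin M // StrictMono g} :=
    ⟨⟨Fin.castLE hNM, Fin.strictMono_castLE hNM⟩⟩
  have hφ : ∀ i, Trop (fun ε => Real.exp ((A i : ℝ) / ε) * φ (P i) ε) (R i) := by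
    intro i
    have e1 := ultra_zpow (ultra_add ultra_one
      (ultra_mul (ultra_exp (-(r : ℝ))) (ultra_exp (P i : ℝ)))) lZ
    have e2 := ultra_zpow (ultra_add ultra_one
      (ultra_mul (ultra_exp (-(s : ℝ))) (ultra_exp (-(P i : ℝ))))) (-m)
    refine ultra_congr (ultra_mul (ultra_exp (A i : ℝ))
      (ultra_mul (ultra_mul (ultra_exp ((n : ℝ) * (P i : ℝ))) e1) e2)) ?_ ?_
    · exact Filter.Eventually.of_forall fun ε => rfl
    · simp only [R]
      rw [show -(r : ℝ) + (P i : ℝ) = (P i : ℝ) - r by ring,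
        show -(s : ℝ) + -(P i : ℝ) = -(P i : ℝ) - s by ring]
      push_cast
      ring
  have hterm : ∀ ι : {g : Fin N → Fin M // StrictMono g},
      Trop (fun ε => (∏ a : Fin N, ∏ b : Fin N,
            if a < b then
              (Real.exp ((P (ι.1 a) : ℝ) / ε) - Real.exp ((P (ι.1 b) : ℝ) / ε)) ^ 2
            else 1) *
            ∏ j, (Real.exp ((A (ι.1 j) : ℝ) / ε) * φ (P (ι.1 j)) ε))
        ((∑ j, R (ι.1 j)) + 2 * ∑ j : Fin N, ((j : ℕ) : ℝ) * (P (ι.1 j) : ℝ)) := by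
    intro ι
    rw [add_comm, ← vander_exponent N fun j => (P (ι.1 j) : ℝ)]
    refine ultra_mul ?_ (ultra_prod _ _ _ fun j _ => hφ (ι.1 j))
    refine ultra_prod _ _ _ fun a _ => ultra_prod _ _ _ fun b _ => ?_
    by_cases hab : a < b
    · simp only [hab, if_true]
      exact ultra_sub_sq (by exact_mod_cast hP (ι.2 hab))
    · simp only [hab, if_false]
      exact ultra_one
  have hsum := ultra_sum Finset.univ Finset.univ_nonempty _ _ fun ι _ => hterm ι
  rw [Finset.sup'_univ_eq_ciSup] at hsum
  refine (ultra_congr hsum (Filter.Eventually.of_forall fun ε => ?_) rfl).2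
  simp only [τ]
  rw [← Finset.sum_filter]
  symm
  exact Finset.sum_subtype (Finset.univ.filter fun g : Fin N → Fin M => StrictMono g)
    (p := fun g : Fin N → Fin M => StrictMono g)
    (fun g => by simp only [Finset.mem_filter, Finset.mem_univ, true_and])
    (fun ι => (∏ a : Fin N, ∏ b : Fin N,
            if a < b then
              (Real.exp ((P (ι a) : ℝ) / ε) - Real.exp ((P (ι b) : ℝ) / ε)) ^ 2
            else 1) *
            ∏ j, (Real.exp ((A (ι j) : ℝ) / ε) * φ (P (ι j)) ε))
end
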